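/- Let G=(V,E,I,T) be an inner Eulerian grapht with |E|≤ℵ₀. Then after the deletion of at most two edges, every t∈T for which δ_G(t) was the unique Erdős-Menger t(T−t)-cut remains linked. -/

import Mathlib

/-! Common definitions: graphts (multigraphs with terminals), walks, paths, cycles,
edge cuts, inner Eulerian graphts, path systems, linkages, Erdős–Menger cuts,
restriction (edge deletion) and contraction. -/

universe u v

/-- A *grapht*: a multigraph (no loops, parallel edges allowed) given by an incidence
function `I : E → Sym2 V`, together with a set `T` of at least two terminal vertices. -/
structure Grapht (V : Type u) (E : Type v) where
  I : E → Sym2 V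
  loopless : ∀ e : E, ¬ (I e).IsDiag
  T : Set V
  T_nontrivial : T.Nontrivial

namespace Grapht

variable {V : Type u} {E : Type v}

/-- `G.IsWalk vs es` holds when `vs` is the vertex sequence and `es` the edge sequence
of a walk in `G`. -/
inductive IsWalk (G : Grapht V E) : List V → List E → Prop
  | nil (v : V) : IsWalk G [v] []
  | cons {u w : V} {vs : List V} {e : E} {es : List E} :
      G.I e = s(u, w) → IsWalk G (w :: vs) es → IsWalk G (u :: w :: vs) (e :: es)

/-- A finite path in the grapht `G` (no repeated vertices), with endpoints `first`, `last`. -/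
structure Path (G : Grapht V E) where
  first : V
  last : V
  verts : List V
  edges : List E
  isWalk : G.IsWalk verts edges
  nodup : verts.Nodup
  head_eq : verts.head? = some first
  getLast_eq : verts.getLast? = some last

/-- A finite cycle in the grapht `G`. -/
structure Cycle (G : Grapht V E) where
  verts : List V
  edges : List E
  isWalk : G.IsWalk verts edges
  closed : verts.head? = verts.getLast?
  nontrivial : edges ≠ []
  edges_nodup : edges.Nodup
  tail_nodup : verts.tail.Nodup

variable {G : Grapht V E}

/-- The internal (inner) vertices of a path. -/
def Path.inner (P : G.Path) : List V := (P.verts.drop 1).dropLast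

/-- The edge set of a path. -/
def Path.edgeSet (P : G.Path) : Set E := {e | e ∈ P.edges}

/-- The edge set of a cycle. -/
def Cycle.edgeSet (C : G.Cycle) : Set E := {e | e ∈ C.edges}

variable (G)

/-- `δ_G(X)`: the set of edges with exactly one endpoint in `X`. -/
def edgeCut (X : Set V) : Set E :=
  {e | ∃ u w, G.I e = s(u, w) ∧ u ∈ X ∧ w ∉ X}

/-- A grapht is *inner Eulerian* if there is no `X ⊆ V ∖ T` whose cut `δ(X)` is a
finite set of odd size. -/
def InnerEulerian : Prop :=
  ∀ X : Set V, Disjoint X G.T → ¬ ((G.edgeCut X).Finite ∧ Odd (G.edgeCut X).ncard)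

/-- An `AB`-path: a path with first vertex in `A`, last vertex in `B` and no internal
vertex in `A ∪ B`. -/
def IsABPath (A B : Set V) (P : G.Path) : Prop :=
  P.first ∈ A ∧ P.last ∈ B ∧ ∀ v ∈ P.inner, v ∉ A ∪ B

/-- A `T`-path: a path between two distinct terminal vertices without internal
terminal vertices. -/
def IsTPath (P : G.Path) : Prop :=
  P.first ∈ G.T ∧ P.last ∈ G.T ∧ P.first ≠ P.last ∧ ∀ v ∈ P.inner, v ∉ G.T

/-- A system of pairwise edge-disjoint paths. -/
def EdgeDisjoint (Ps : Set G.Path) : Prop :=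
  Ps.Pairwise fun P Q => ∀ e, e ∈ P.edges → e ∉ Q.edges

/-- A system of pairwise edge-disjoint `T`-paths. -/
def IsTPathSystem (Ps : Set G.Path) : Prop :=
  G.EdgeDisjoint Ps ∧ ∀ P ∈ Ps, G.IsTPath P

/-- The set of edges used by a path system. -/
def sysEdges (Ps : Set G.Path) : Set E := ⋃ P ∈ Ps, P.edgeSet

/-- `C` is *orthogonal* to the path system `Ps`: `C` consists of exactly one edge from
each path of `Ps`. -/
def Orthogonal (C : Set E) (Ps : Set G.Path) : Prop :=
  (∀ P ∈ Ps, ∃! e, e ∈ C ∧ e ∈ P.edges) ∧ ∀ e ∈ C, ∃ P ∈ Ps, e ∈ P.edges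

/-- `C` separates `A` and `B`: every `AB`-path meets `C` (i.e. `G − C` has no `AB`-path). -/
def Separates (C : Set E) (A B : Set V) : Prop :=
  ∀ P : G.Path, G.IsABPath A B P → ∃ e ∈ C, e ∈ P.edges

/-- An `AB`-cut. -/
def IsABCut (A B : Set V) (C : Set E) : Prop :=
  ∀ P : G.Path, G.IsABPath A B P → ∃ e ∈ C, e ∈ P.edges

/-- An Erdős–Menger `AB`-cut: an `AB`-cut orthogonal to some system of pairwise
edge-disjoint `AB`-paths. -/
def IsEMABCut (A B : Set V) (C : Set E) : Prop :=
  G.IsABCut A B C ∧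
    ∃ Ps : Set G.Path, G.EdgeDisjoint Ps ∧ (∀ P ∈ Ps, G.IsABPath A B P) ∧ G.Orthogonal C Ps

/-- The order `⊴` on (Erdős–Menger) `AB`-cuts: on every `AB`-path the first edge of `C`
comes no later than the first edge of `C'`. -/
def ABCutLE (A B : Set V) (C C' : Set E) : Prop :=
  ∀ P : G.Path, G.IsABPath A B P →
    ∀ i : Fin P.edges.length, P.edges.get i ∈ C' →
      ∃ j : Fin P.edges.length, (j : ℕ) ≤ (i : ℕ) ∧ P.edges.get j ∈ C

/-- `C` is the `⊴`-largest Erdős–Menger `AB`-cut. -/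
def IsLargestEMABCut (A B : Set V) (C : Set E) : Prop :=
  G.IsEMABCut A B C ∧ ∀ C', G.IsEMABCut A B C' → G.ABCutLE A B C' C

/-- A system `Ps` of pairwise edge-disjoint `T`-paths *links* the terminal `t`:
it covers `δ(t)`. -/
def Links (Ps : Set G.Path) (t : V) : Prop :=
  G.IsTPathSystem Ps ∧ ∀ e ∈ G.edgeCut {t}, ∃ P ∈ Ps, e ∈ P.edges

/-- The terminal `t` is linked. -/
def Linked (t : V) : Prop := ∃ Ps : Set G.Path, G.Links Ps t

/-- The linkability condition: every terminal is linked. -/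
def LinkabilityCondition : Prop := ∀ t ∈ G.T, G.Linked t

/-- A perfect linkage: a system of pairwise edge-disjoint `T`-paths linking every
terminal. -/
def IsPerfectLinkage (Ps : Set G.Path) : Prop :=
  G.IsTPathSystem Ps ∧ ∀ t ∈ G.T, ∀ e ∈ G.edgeCut {t}, ∃ P ∈ Ps, e ∈ P.edges

/-- In the two-terminal setting: a system of pairwise edge-disjoint `st`-paths
covering `δ(s)` (a linkage of `s`). -/
def IsStLinkage (s t : V) (Ps : Set G.Path) : Prop :=
  G.EdgeDisjoint Ps ∧ (∀ P ∈ Ps, G.IsABPath {s} {t} P) ∧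
    ∀ e ∈ G.edgeCut {s}, ∃ P ∈ Ps, e ∈ P.edges

/-- `s` is linked (two-terminal setting). -/
def StLinked (s t : V) : Prop := ∃ Ps : Set G.Path, G.IsStLinkage s t Ps

/-- `λ_G(A,B)`: the maximal number of pairwise edge-disjoint `AB`-paths. -/
noncomputable def lambda (A B : Set V) : ℕ :=
  sSup {n : ℕ | ∃ Ps : Set G.Path, G.EdgeDisjoint Ps ∧ (∀ P ∈ Ps, G.IsABPath A B P) ∧
    Ps.Finite ∧ Ps.ncard = n}

/-- The grapht obtained by deleting all edges outside `F`. -/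
def restrict (F : Set E) : Grapht V F where
  I e := G.I e.1
  loopless e := G.loopless e.1
  T := G.T
  T_nontrivial := G.T_nontrivial

/-- The map sending every vertex of a contracted set `X t` (`t ∈ T`) to `t`. -/
noncomputable def contractMap (X : V → Set V) : V → V := fun v =>
  letI := Classical.dec (∃ u ∈ G.T, v ∈ X u)
  if h : ∃ u ∈ G.T, v ∈ X u then h.choose else v

/-- The contraction `G/ℱ` of the family `ℱ = {X t : t ∈ T}`: each `X t` is contracted
to `t` and the arising loops are deleted. -/
noncomputable def contract (X : V → Set V) :
    Grapht V {e : E // ¬ ((G.I e).map (G.contractMap X)).IsDiag} where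
  I e := (G.I e.1).map (G.contractMap X)
  loopless e := e.2
  T := G.T
  T_nontrivial := G.T_nontrivial

end Grapht

/-!
Start from an Erdős–Menger linkage covering `δ(t)` and delete `f`, then `g`. After each deletion an
augmenting path argument either repairs the linkage or stops at a vertex set `X` whose remaining cut
edges meet every path exactly once. For `f` alone, `δ(X)` would be a second Erdős–Menger cut.
For `g` the cut is Erdős–Menger only up to the edge `f`, so on both sides of `X` a linkage that
misses at most one edge of `δ(X)` has to be completed. The side of `X` containing `t` has no other
terminal, and there the missed edge can be covered while any given finite set of paths is kept: the
set of vertices from which it can be reached along unused edges would otherwise have a finite odd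
cut. Each exchange may uncover another edge, but countably many of them converge to a full linkage.
On the other side an augmentation can only fail at a cut which uniqueness identifies with `δ(t)`,
and this is impossible because `g ∉ δ(t)`. Concatenating the two linkages along `δ(X)` makes `δ(X)`
an Erdős–Menger cut different from `δ(t)`.
-/

namespace Grapht

variable {V : Type u} {E : Type v} {G : Grapht V E}

/-- An edge of `G` together with one of its two orientations. -/
@[ext]
structure Dart (G : Grapht V E) where
  edge : E
  fst : V
  snd : V
  incidence : G.I edge = s(fst, snd)

namespace Dart

/-- The same edge with the opposite orientation. -/
def symm (d : G.Dart) : G.Dart where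
  edge := d.edge
  fst := d.snd
  snd := d.fst
  incidence := d.incidence.trans Sym2.eq_swap

theorem fst_ne_snd (d : G.Dart) : d.fst ≠ d.snd := fun h =>
  G.loopless d.edge (by rw [d.incidence, h]; exact Sym2.diag_isDiag _)

theorem eq_or_eq_symm_of_edge_eq {d d' : G.Dart} (h : d.edge = d'.edge) :
    d = d' ∨ d = d'.symm := by
  have hI : s(d.fst, d.snd) = s(d'.fst, d'.snd) := by
    rw [← d.incidence, ← d'.incidence, h]
  rcases Sym2.eq_iff.1 hI with ⟨h₁, h₂⟩ | ⟨h₁, h₂⟩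
  · exact .inl (Dart.ext h h₁ h₂)
  · exact .inr (Dart.ext h h₁ h₂)

theorem edge_mem_edgeCut_iff (d : G.Dart) {X : Set V} :
    d.edge ∈ G.edgeCut X ↔ (d.fst ∈ X ↔ d.snd ∉ X) := by
  constructor
  · rintro ⟨u, w, hI, hu, hw⟩
    rcases Sym2.eq_iff.1 (d.incidence.symm.trans hI) with ⟨h₁, h₂⟩ | ⟨h₁, h₂⟩ <;>
      simp [h₁, h₂, hu, hw]
  · intro h
    by_cases hd : d.fst ∈ X
    · exact ⟨d.fst, d.snd, d.incidence, hd, h.1 hd⟩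
    · exact ⟨d.snd, d.fst, d.symm.incidence, by tauto, hd⟩

end Dart

theorem exists_dart_of_mem_edgeCut {X : Set V} {e : E} (he : e ∈ G.edgeCut X) :
    ∃ d : G.Dart, d.edge = e ∧ d.fst ∈ X ∧ d.snd ∉ X :=
  let ⟨u, w, hI, hu, hw⟩ := he
  ⟨⟨e, u, w, hI⟩, rfl, hu, hw⟩

theorem edgeCut_inter_subset {A X Y : Set V} (hAX : A ⊆ X) (hXY : X ⊆ Y) :
    G.edgeCut A ∩ G.edgeCut Y ⊆ G.edgeCut X := by
  rintro e ⟨hA, hY⟩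
  obtain ⟨d, rfl, hfst, -⟩ := exists_dart_of_mem_edgeCut hA
  exact d.edge_mem_edgeCut_iff.2
    ⟨fun _ h => (d.edge_mem_edgeCut_iff.1 hY).1 (hXY (hAX hfst)) (hXY h), fun _ => hAX hfst⟩

/-- `Reaches D a b`: there is a directed walk from `a` to `b` all of whose darts lie in `D`. -/
def Reaches (D : Set G.Dart) : V → V → Prop :=
  Relation.ReflTransGen fun u w => ∃ d ∈ D, d.fst = u ∧ d.snd = w

namespace Reaches

variable {D D' : Set G.Dart} {a b c : V}

theorem mono (hD : D ⊆ D') (h : Reaches D a b) : Reaches D' a b :=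
  Relation.ReflTransGen.mono (fun _ _ ⟨d, hd, hu⟩ => ⟨d, hD hd, hu⟩) _ _ h

theorem trans (hab : Reaches D a b) (hbc : Reaches D b c) : Reaches D a c :=
  Relation.ReflTransGen.trans hab hbc

theorem of_mem {d : G.Dart} (hd : d ∈ D) : Reaches D d.fst d.snd :=
  Relation.ReflTransGen.single ⟨d, hd, rfl, rfl⟩

theorem exists_crossing {X : Set V} (h : Reaches D a b) (ha : a ∈ X) (hb : b ∉ X) :
    ∃ d ∈ D, d.fst ∈ X ∧ d.snd ∉ X := by
  induction h with
  | refl => exact absurd ha hb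
  | @tail u w _ hd ih =>
    obtain ⟨d, hd, rfl, rfl⟩ := hd
    by_cases hu : d.fst ∈ X
    · exact ⟨d, hd, hu, hb⟩
    · exact ih hu

theorem exists_trim_right {B : Set V} (h : Reaches D a b) (hb : b ∈ B) :
    ∃ b' ∈ B, Reaches {d ∈ D | d.fst ∉ B} a b' := by
  induction h using Relation.ReflTransGen.head_induction_on with
  | refl => exact ⟨b, hb, .refl⟩
  | @head u w hd _ ih =>
    obtain ⟨d, hd, rfl, rfl⟩ := hd
    by_cases hu : d.fst ∈ B
    · exact ⟨d.fst, hu, .refl⟩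
    · obtain ⟨b', hb', h⟩ := ih
      exact ⟨b', hb', (of_mem (D := {d ∈ D | d.fst ∉ B}) ⟨hd, hu⟩).trans h⟩

theorem exists_trim_left {A : Set V} (h : Reaches D a b) (ha : a ∈ A) :
    ∃ a' ∈ A, Reaches {d ∈ D | d.snd ∉ A} a' b := by
  induction h with
  | refl => exact ⟨a, ha, .refl⟩
  | @tail u w _ hd ih =>
    obtain ⟨d, hd, rfl, rfl⟩ := hd
    by_cases hw : d.snd ∈ A
    · exact ⟨d.snd, hw, .refl⟩
    · obtain ⟨a', ha', h⟩ := ih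
      exact ⟨a', ha', h.trans (of_mem (D := {d ∈ D | d.snd ∉ A}) ⟨hd, hw⟩)⟩

theorem inside {X : Set V} (h : Reaches D a b) (hD : ∀ d ∈ D, d.fst ∈ X) (hb : b ∈ X) :
    Reaches {d ∈ D | d.snd ∈ X} a b := by
  induction h with
  | refl => exact .refl
  | @tail u w _ hd ih =>
    obtain ⟨d, hd, rfl, rfl⟩ := hd
    exact (ih (hD d hd)).trans (of_mem (D := {d ∈ D | d.snd ∈ X}) ⟨hd, hb⟩)

end Reaches

theorem IsWalk.length_eq {vs : List V} {es : List E} (h : G.IsWalk vs es) :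
    vs.length = es.length + 1 := by
  induction h with
  | nil => rfl
  | cons _ _ ih => simpa using ih

theorem isWalk_iff {vs : List V} {es : List E} :
    G.IsWalk vs es ↔ ∃ h : vs.length = es.length + 1,
      ∀ (i : ℕ) (hi : i < es.length), G.I es[i] = s(vs[i], vs[i + 1]) := by
  constructor
  · refine fun h => ⟨h.length_eq, ?_⟩
    induction h with
    | nil => simp
    | cons hI _ ih =>
      rintro (_ | i) hi
      · exact hI
      · exact ih i (Nat.lt_of_succ_lt_succ hi)
  · rintro ⟨hlen, hI⟩
    induction es generalizing vs with
    | nil =>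
      obtain ⟨v, rfl⟩ := List.length_eq_one_iff.1 hlen
      exact .nil v
    | cons e es ih =>
      match vs, hlen with
      | u :: w :: vs, hlen =>
        exact .cons (hI 0 (Nat.succ_pos _)) (ih (Nat.succ_injective hlen) fun i hi =>
          hI (i + 1) (Nat.succ_lt_succ hi))

namespace Path

variable (P : G.Path)

theorem length_verts : P.verts.length = P.edges.length + 1 :=
  P.isWalk.length_eq

/-- The `i`-th vertex of a path. -/
def vert (i : Fin (P.edges.length + 1)) : V :=
  P.verts.get (i.cast P.length_verts.symm)

theorem vert_injective : Function.Injective P.vert := fun _ _ h =>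
  Fin.cast_injective _ (P.nodup.injective_get h)

theorem vert_zero : P.vert 0 = P.first := by
  have h := P.head_eq
  rw [List.head?_eq_getElem?] at h
  exact (List.getElem?_eq_some_iff.1 h).2

theorem vert_last : P.vert (Fin.last _) = P.last := by
  have h := P.getLast_eq
  rw [List.getLast?_eq_getElem?] at h
  obtain ⟨_, h⟩ := List.getElem?_eq_some_iff.1 h
  simp only [← h, vert, P.length_verts, List.get_eq_getElem, Fin.val_cast, Fin.val_last,
    Nat.add_sub_cancel]

/-- The `i`-th edge of a path, oriented in the direction of travel. -/
@[simps]
def dart (i : Fin P.edges.length) : G.Dart where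
  edge := P.edges.get i
  fst := P.vert i.castSucc
  snd := P.vert i.succ
  incidence := (isWalk_iff.1 P.isWalk).2 i i.2

/-- The edges of a path, oriented in the direction of travel. -/
def darts : Set G.Dart := Set.range P.dart

variable {P}

theorem mem_edges_iff {e : E} : e ∈ P.edges ↔ ∃ d ∈ P.darts, d.edge = e := by
  simp only [darts, Set.exists_range_iff, dart_edge, List.mem_iff_get]

theorem edge_mem_edges {d : G.Dart} (hd : d ∈ P.darts) : d.edge ∈ P.edges :=
  mem_edges_iff.2 ⟨d, hd, rfl⟩

theorem dart_edge_injective : Function.Injective fun i => (P.dart i).edge := by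
  intro i j h
  rcases Dart.eq_or_eq_symm_of_edge_eq h with h | h
  · exact Fin.castSucc_injective _ (P.vert_injective (congrArg Dart.fst h))
  · have h₁ := P.vert_injective (congrArg Dart.fst h)
    have h₂ := P.vert_injective (congrArg Dart.snd h)
    simp only [Fin.ext_iff, Fin.val_castSucc, Fin.val_succ] at h₁ h₂
    omega

theorem reaches_vert {i j : Fin (P.edges.length + 1)} (hij : i ≤ j) :
    Reaches (P.dart '' {k | i ≤ k.castSucc ∧ k.succ ≤ j}) (P.vert i) (P.vert j) := by
  induction j using Fin.induction with
  | zero => rw [Fin.le_zero_iff.1 hij]; exact .refl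
  | succ j ih =>
    rcases hij.eq_or_lt with rfl | hlt
    · exact .refl
    · have hle : i ≤ j.castSucc := Fin.le_castSucc_iff.2 hlt
      have hmono : {k : Fin P.edges.length | i ≤ k.castSucc ∧ k.succ ≤ j.castSucc} ⊆
          {k | i ≤ k.castSucc ∧ k.succ ≤ j.succ} :=
        fun k hk => ⟨hk.1, hk.2.trans j.castSucc_lt_succ.le⟩
      have hj : P.dart j ∈ P.dart '' {k | i ≤ k.castSucc ∧ k.succ ≤ j.succ} :=
        Set.mem_image_of_mem P.dart ⟨hle, le_rfl⟩
      exact ((ih hle).mono (Set.image_mono hmono)).trans (Reaches.of_mem hj)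

theorem reaches : Reaches P.darts P.first P.last := by
  rw [← P.vert_zero, ← P.vert_last]
  exact (reaches_vert (Fin.zero_le _)).mono (Set.image_subset_range _ _)

theorem reaches_dart_fst (k : Fin P.edges.length) :
    Reaches (P.dart '' Set.Iio k) P.first (P.dart k).fst := by
  rw [← P.vert_zero]
  exact (reaches_vert (Fin.zero_le _)).mono (Set.image_mono (t := Set.Iio k) fun _ hj => hj.2)

theorem reaches_dart_snd (k : Fin P.edges.length) :
    Reaches (P.dart '' Set.Ioi k) (P.dart k).snd P.last := by
  rw [← P.vert_last]
  exact (reaches_vert (Fin.le_last _)).mono (Set.image_mono (t := Set.Ioi k) fun _ hj => hj.1)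

theorem subsingleton_edgeSet_inter_edgeCut {X : Set V}
    (hP : ∀ d ∈ P.darts, d.snd ∈ X → d.fst ∈ X) : (P.edgeSet ∩ G.edgeCut X).Subsingleton := by
  have hlt : ∀ i j, i < j → (P.dart i).edge ∈ G.edgeCut X → (P.dart j).edge ∉ G.edgeCut X := by
    intro i j hij hi hj
    rw [Dart.edge_mem_edgeCut_iff] at hi hj
    have hPi := hP _ ⟨i, rfl⟩
    have hPj := hP _ ⟨j, rfl⟩
    have hseg : Reaches P.darts (P.dart i).snd (P.dart j).fst :=
      (reaches_vert (i := i.succ) (j := j.castSucc) hij).mono (Set.image_subset_range _ _)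
    obtain ⟨d, hd, hfst, hsnd⟩ := hseg.exists_crossing (X := Xᶜ) (by grind) (by grind)
    exact hfst (hP d hd (not_not.1 hsnd))
  rintro e ⟨he, heX⟩ e' ⟨he', heX'⟩
  obtain ⟨_, ⟨i, rfl⟩, rfl⟩ := mem_edges_iff.1 he
  obtain ⟨_, ⟨j, rfl⟩, rfl⟩ := mem_edges_iff.1 he'
  rcases lt_trichotomy i j with hij | rfl | hij
  · exact absurd heX' (hlt i j hij heX)
  · rfl
  · exact absurd heX (hlt j i hij heX')

theorem edges_nodup : P.edges.Nodup :=
  List.nodup_iff_injective_get.2 dart_edge_injective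

end Path

theorem IsWalk.even_ncard_edgeCut_iff {vs : List V} {es : List E} (h : G.IsWalk vs es)
    (hes : es.Nodup) {a b : V} (ha : vs.head? = some a) (hb : vs.getLast? = some b)
    (X : Set V) : Even ({e | e ∈ es} ∩ G.edgeCut X).ncard ↔ (a ∈ X ↔ b ∈ X) := by
  induction h generalizing a with
  | nil => simp_all
  | @cons u w vs e es hI _ ih =>
    obtain rfl : u = a := Option.some_injective _ ha
    have hcut := Dart.edge_mem_edgeCut_iff ⟨e, u, w, hI⟩ (X := X)
    have ih := ih (List.nodup_cons.1 hes).2 (a := w) rfl hb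
    have hfin : ({e | e ∈ es} ∩ G.edgeCut X).Finite := es.finite_toSet.inter_of_left _
    have hcons : {e' | e' ∈ e :: es} = insert e {e' | e' ∈ es} := by ext; simp
    by_cases he : e ∈ G.edgeCut X
    · have hnot : e ∉ {e | e ∈ es} ∩ G.edgeCut X := fun h => (List.nodup_cons.1 hes).1 h.1
      rw [hcons, Set.insert_inter_of_mem he, Set.ncard_insert_of_notMem hnot hfin,
        Nat.even_add_one, ih]
      grind
    · rw [hcons, Set.insert_inter_of_notMem he, ih]
      grind

namespace Path

variable {P : G.Path}

theorem even_ncard_edgeCut_iff (X : Set V) :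
    Even (P.edgeSet ∩ G.edgeCut X).ncard ↔ (P.first ∈ X ↔ P.last ∈ X) :=
  P.isWalk.even_ncard_edgeCut_iff edges_nodup P.head_eq P.getLast_eq X

theorem mem_inner_iff {v : V} :
    v ∈ P.inner ↔ ∃ i : Fin (P.edges.length + 1), 0 < i ∧ i < Fin.last _ ∧ P.vert i = v := by
  have hlen := P.length_verts
  simp only [inner, List.dropLast_eq_take, List.mem_iff_getElem, List.length_take,
    List.length_drop, List.getElem_take, List.getElem_drop, vert, List.get_eq_getElem]
  constructor
  · rintro ⟨i, hi, rfl⟩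
    exact ⟨⟨1 + i, by omega⟩, by simp [Fin.lt_def], by simp [Fin.lt_def]; omega, rfl⟩
  · rintro ⟨⟨i, hi⟩, h0, hn, rfl⟩
    simp only [Fin.lt_def, Fin.val_last, Fin.val_zero] at h0 hn
    refine ⟨i - 1, by omega, ?_⟩
    simp [show 1 + (i - 1) = i by omega]

end Path

theorem isABPath_iff {A B : Set V} (hAB : Disjoint A B) {P : G.Path} :
    G.IsABPath A B P ↔
      P.first ∈ A ∧ P.last ∈ B ∧ ∀ d ∈ P.darts, d.fst ∉ B ∧ d.snd ∉ A := by
  refine and_congr_right fun hA => and_congr_right fun hB => ⟨fun h => ?_, fun h v hv => ?_⟩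
  · rintro _ ⟨k, rfl⟩
    constructor
    · rcases eq_or_ne k.castSucc 0 with h0 | h0
      · rw [Path.dart_fst, h0, P.vert_zero]
        exact hAB.notMem_of_mem_left hA
      · exact fun hk => h _ (Path.mem_inner_iff.2
          ⟨_, Fin.pos_iff_ne_zero.2 h0, Fin.castSucc_lt_last k, rfl⟩) (.inr hk)
    · rcases eq_or_ne k.succ (Fin.last _) with hn | hn
      · rw [Path.dart_snd, hn, P.vert_last]
        exact hAB.notMem_of_mem_right hB
      · exact fun hk => h _ (Path.mem_inner_iff.2
          ⟨_, Fin.succ_pos k, Fin.lt_last_iff_ne_last.2 hn, rfl⟩) (.inl hk)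
  · obtain ⟨i, h0, hn, rfl⟩ := Path.mem_inner_iff.1 hv
    obtain ⟨j, rfl⟩ := Fin.exists_succ_eq.2 h0.ne'
    obtain ⟨k, hk⟩ := Fin.exists_castSucc_eq.2 hn.ne
    exact not_or.2 ⟨(h _ ⟨j, rfl⟩).2, hk ▸ (h _ ⟨k, rfl⟩).1⟩

namespace Path

/-- The one-vertex path. -/
def single (v : V) : G.Path where
  first := v
  last := v
  verts := [v]
  edges := []
  isWalk := .nil v
  nodup := List.nodup_singleton v
  head_eq := rfl
  getLast_eq := rfl

/-- The path obtained from `P` by prepending a dart. -/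
def cons (d : G.Dart) (P : G.Path) (hP : P.first = d.snd) (hd : d.fst ∉ P.verts) :
    G.Path where
  first := d.fst
  last := P.last
  verts := d.fst :: P.verts
  edges := d.edge :: P.edges
  isWalk := by
    obtain ⟨l, hl⟩ := List.head?_eq_some_iff.1 P.head_eq
    have hwalk := P.isWalk
    rw [hl, hP] at hwalk ⊢
    exact .cons d.incidence hwalk
  nodup := List.nodup_cons.2 ⟨hd, P.nodup⟩
  head_eq := rfl
  getLast_eq := by rw [List.getLast?_cons, P.getLast_eq]; rfl

/-- The final part of `P`, starting at its `i`-th vertex. -/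
def drop (P : G.Path) (i : Fin (P.edges.length + 1)) : G.Path where
  first := P.vert i
  last := P.last
  verts := P.verts.drop i
  edges := P.edges.drop i
  isWalk := by
    refine isWalk_iff.2 ⟨?_, fun k hk => ?_⟩
    · rw [List.length_drop, List.length_drop, P.length_verts, Nat.sub_add_comm i.is_le]
    · rw [List.getElem_drop, List.getElem_drop, List.getElem_drop]
      exact (isWalk_iff.1 P.isWalk).2 (i + k) _
  nodup := P.nodup.sublist (List.drop_sublist _ _)
  head_eq := by
    rw [List.head?_drop]
    exact List.getElem?_eq_getElem _
  getLast_eq := by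
    have := P.length_verts
    rw [List.getLast?_drop, if_neg (by omega), P.getLast_eq]

theorem darts_single (v : V) : (single v : G.Path).darts = ∅ :=
  Set.range_eq_empty_iff.2 Fin.isEmpty

theorem darts_cons_subset {d : G.Dart} {P : G.Path} (hP : P.first = d.snd)
    (hd : d.fst ∉ P.verts) : (cons d P hP hd).darts ⊆ insert d P.darts := by
  rintro _ ⟨⟨k, hk⟩, rfl⟩
  cases k with
  | zero => exact .inl (Dart.ext rfl rfl (P.vert_zero.trans hP))
  | succ k => exact .inr ⟨⟨k, Nat.lt_of_succ_lt_succ hk⟩, rfl⟩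

theorem darts_drop_subset (P : G.Path) (i : Fin (P.edges.length + 1)) :
    (P.drop i).darts ⊆ P.darts := by
  rintro _ ⟨⟨k, hk⟩, rfl⟩
  refine ⟨⟨i + k, ?_⟩, Dart.ext ?_ ?_ ?_⟩
  · exact Nat.add_lt_of_lt_sub' (List.length_drop ▸ hk)
  · exact List.getElem_drop.symm
  · exact List.getElem_drop.symm
  · exact (List.getElem_drop (i := i) (j := k + 1) ..).symm

theorem exists_vert_eq {P : G.Path} {v : V} (hv : v ∈ P.verts) : ∃ i, P.vert i = v := by
  obtain ⟨i, rfl⟩ := List.mem_iff_get.1 hv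
  exact ⟨i.cast P.length_verts, rfl⟩

end Path

theorem exists_path_of_reaches {D : Set G.Dart} {a b : V} (h : Reaches D a b) :
    ∃ P : G.Path, P.first = a ∧ P.last = b ∧ P.darts ⊆ D := by
  induction h using Relation.ReflTransGen.head_induction_on with
  | refl => exact ⟨.single b, rfl, rfl, (Path.darts_single b).trans_subset (Set.empty_subset D)⟩
  | @head u w hd _ ih =>
    obtain ⟨d, hd, rfl, rfl⟩ := hd
    obtain ⟨P, hfirst, hlast, hP⟩ := ih
    by_cases hu : d.fst ∈ P.verts
    · obtain ⟨i, hi⟩ := Path.exists_vert_eq hu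
      exact ⟨P.drop i, hi, hlast, (P.darts_drop_subset i).trans hP⟩
    · exact ⟨.cons d P hfirst hu, rfl, hlast,
        (Path.darts_cons_subset hfirst hu).trans (Set.insert_subset hd hP)⟩

theorem exists_abPath_of_reaches {A B : Set V} (hAB : Disjoint A B) {D : Set G.Dart} {a b : V}
    (ha : a ∈ A) (hb : b ∈ B) (h : Reaches D a b) :
    ∃ P, G.IsABPath A B P ∧ P.darts ⊆ D := by
  obtain ⟨b', hb', h⟩ := h.exists_trim_right hb
  obtain ⟨a', ha', h⟩ := h.exists_trim_left ha
  obtain ⟨P, rfl, rfl, hP⟩ := exists_path_of_reaches h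
  exact ⟨P, (isABPath_iff hAB).2 ⟨ha', hb', fun d hd => ⟨(hP hd).1.2, (hP hd).2⟩⟩,
    fun d hd => (hP hd).1.1⟩

namespace Path

theorem eq_of_edge_eq {P : G.Path} {d d' : G.Dart} (hd : d ∈ P.darts) (hd' : d' ∈ P.darts)
    (h : d.edge = d'.edge) : d = d' := by
  obtain ⟨i, rfl⟩ := hd
  obtain ⟨j, rfl⟩ := hd'
  exact congrArg P.dart (dart_edge_injective h)

theorem symm_notMem_darts {P : G.Path} {d : G.Dart} (hd : d ∈ P.darts) :
    d.symm ∉ P.darts := fun h =>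
  d.fst_ne_snd (congrArg Dart.fst (eq_of_edge_eq hd h rfl))

end Path

theorem mem_sysEdges {Ps : Set G.Path} {e : E} : e ∈ G.sysEdges Ps ↔ ∃ P ∈ Ps, e ∈ P.edges := by
  simp only [sysEdges, Set.mem_iUnion₂, exists_prop, Path.edgeSet, Set.mem_ofPred_eq]

theorem edgeSet_subset_sysEdges {Ps : Set G.Path} {P : G.Path} (hP : P ∈ Ps) :
    P.edgeSet ⊆ G.sysEdges Ps :=
  Set.subset_biUnion_of_mem (u := Path.edgeSet) hP

theorem sysEdges_mono {Ps Qs : Set G.Path} (h : Ps ⊆ Qs) : G.sysEdges Ps ⊆ G.sysEdges Qs :=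
  Set.biUnion_mono h fun _ _ => subset_rfl

theorem sysEdges_insert (P : G.Path) (Ps : Set G.Path) :
    G.sysEdges (insert P Ps) = P.edgeSet ∪ G.sysEdges Ps :=
  Set.biUnion_insert P Ps Path.edgeSet

theorem EdgeDisjoint.eq_of_mem {Ps : Set G.Path} (h : G.EdgeDisjoint Ps) {P Q : G.Path}
    (hP : P ∈ Ps) (hQ : Q ∈ Ps) {e : E} (heP : e ∈ P.edges) (heQ : e ∈ Q.edges) : P = Q := by
  by_contra hne
  exact h hP hQ hne e heP heQ

/-- A system of pairwise edge-disjoint `AB`-paths using only edges of `S`. -/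
structure IsABSystem (G : Grapht V E) (A B : Set V) (S : Set E) (Ps : Set G.Path) : Prop where
  edgeDisjoint : G.EdgeDisjoint Ps
  isABPath : ∀ P ∈ Ps, G.IsABPath A B P
  sysEdges_subset : G.sysEdges Ps ⊆ S

namespace IsABSystem

variable {A B : Set V} {S S' : Set E} {Ps Qs : Set G.Path} {P : G.Path}

theorem of_subset (h : G.IsABSystem A B S Ps) (hQ : Qs ⊆ Ps) (hS : G.sysEdges Qs ⊆ S') :
    G.IsABSystem A B S' Qs :=
  ⟨h.edgeDisjoint.mono hQ, fun P hP => h.isABPath P (hQ hP), hS⟩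

theorem edge_mem (h : G.IsABSystem A B S Ps) (hP : P ∈ Ps) {e : E} (he : e ∈ P.edges) : e ∈ S :=
  h.sysEdges_subset (edgeSet_subset_sysEdges hP he)

theorem insert_path (h : G.IsABSystem A B S Ps) (hP : G.IsABPath A B P)
    (hPS : P.edgeSet ⊆ S \ G.sysEdges Ps) : G.IsABSystem A B S (insert P Ps) where
  edgeDisjoint := by
    refine Set.pairwise_insert.2 ⟨h.edgeDisjoint, fun Q hQ _ => ⟨fun e heP heQ => ?_,
      fun e heQ heP => ?_⟩⟩ <;>
    exact (hPS heP).2 (edgeSet_subset_sysEdges hQ heQ)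
  isABPath := Set.forall_mem_insert.2 ⟨hP, h.isABPath⟩
  sysEdges_subset := by
    rw [sysEdges_insert]
    exact Set.union_subset (fun e he => (hPS he).1) h.sysEdges_subset

end IsABSystem

theorem sysEdges_diff_singleton {Ps : Set G.Path} (h : G.EdgeDisjoint Ps) {P : G.Path}
    (hP : P ∈ Ps) : G.sysEdges (Ps \ {P}) = G.sysEdges Ps \ P.edgeSet := by
  ext e
  simp only [mem_sysEdges, Set.mem_sdiff, Set.mem_singleton_iff]
  constructor
  · rintro ⟨Q, ⟨hQ, hne⟩, heQ⟩
    exact ⟨⟨Q, hQ, heQ⟩, fun heP => hne (h.eq_of_mem hQ hP heQ heP)⟩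
  · rintro ⟨⟨Q, hQ, heQ⟩, heP⟩
    exact ⟨Q, ⟨hQ, fun hQP => heP (hQP ▸ heQ)⟩, heQ⟩

namespace IsABPath

variable {A B : Set V} {P : G.Path}

theorem exists_dart_fst_mem (hAB : Disjoint A B) (hP : G.IsABPath A B P) :
    ∃ d ∈ P.darts, d.fst ∈ A :=
  let ⟨d, hd, hdA, _⟩ := P.reaches.exists_crossing hP.1 (hAB.notMem_of_mem_right hP.2.1)
  ⟨d, hd, hdA⟩

theorem edge_mem_edgeCut_iff (hAB : Disjoint A B) (hP : G.IsABPath A B P) {d : G.Dart}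
    (hd : d ∈ P.darts) : d.edge ∈ G.edgeCut A ↔ d.fst ∈ A := by
  have hsnd : d.snd ∉ A := (((isABPath_iff hAB).1 hP).2.2 d hd).2
  rw [d.edge_mem_edgeCut_iff, iff_true_right hsnd]

theorem subsingleton_edgeCut_left (hAB : Disjoint A B) (hP : G.IsABPath A B P) :
    (P.edgeSet ∩ G.edgeCut A).Subsingleton :=
  Path.subsingleton_edgeSet_inter_edgeCut fun d hd hsnd =>
    absurd hsnd (((isABPath_iff hAB).1 hP).2.2 d hd).2

theorem dart_eq_of_fst_mem (hAB : Disjoint A B) (hP : G.IsABPath A B P) {d d' : G.Dart}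
    (hd : d ∈ P.darts) (hd' : d' ∈ P.darts) (hdA : d.fst ∈ A) (hdA' : d'.fst ∈ A) : d = d' :=
  Path.eq_of_edge_eq hd hd' <| hP.subsingleton_edgeCut_left hAB
    ⟨Path.edge_mem_edges hd, (hP.edge_mem_edgeCut_iff hAB hd).2 hdA⟩
    ⟨Path.edge_mem_edges hd', (hP.edge_mem_edgeCut_iff hAB hd').2 hdA'⟩

end IsABPath

theorem IsABSystem.replace {A B : Set V} {S : Set E} {Ps : Set G.Path} {P N : G.Path}
    (h : G.IsABSystem A B S Ps) (hP : P ∈ Ps) (hN : G.IsABPath A B N)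
    (hNS : N.edgeSet ⊆ S \ (G.sysEdges Ps \ P.edgeSet)) :
    G.IsABSystem A B S (insert N (Ps \ {P})) :=
  (h.of_subset Set.sdiff_subset
    ((sysEdges_mono Set.sdiff_subset).trans h.sysEdges_subset)).insert_path hN
      (by rwa [sysEdges_diff_singleton h.edgeDisjoint hP])

/-- The darts traversed by the paths of a system. -/
def sysDarts (Ps : Set G.Path) : Set G.Dart := ⋃ P ∈ Ps, P.darts

theorem mem_sysDarts {Ps : Set G.Path} {d : G.Dart} :
    d ∈ sysDarts Ps ↔ ∃ P ∈ Ps, d ∈ P.darts :=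
  Set.mem_iUnion₂.trans (by simp only [exists_prop])

/-- An intermediate stage of augmenting an `AB`-system along a residual path: an `AB`-system `Ps`
together with a set `D` of darts, avoiding its edges, that leads from `A` to `v`. The edges in `F`
are to be covered in the end, and at most the one at which `D` leaves `A` is missing. -/
structure IsPartialAugmentation (A B : Set V) (S F : Set E) (v : V) (Ps : Set G.Path)
    (D : Set G.Dart) : Prop where
  isABSystem : G.IsABSystem A B S Ps
  edge_mem : ∀ d ∈ D, d.edge ∈ S \ G.sysEdges Ps
  reaches : ∃ a ∈ A, Reaches D a v
  covers : ∃ e, F ⊆ insert e (G.sysEdges Ps) ∧ ∀ d ∈ D, d.fst ∈ A → d.edge = e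

namespace IsPartialAugmentation

variable {A B : Set V} {S F : Set E} {v : V} {Ps : Set G.Path} {D : Set G.Dart}

theorem insert_dart {d : G.Dart} (h : IsPartialAugmentation A B S F d.fst Ps D)
    (hdS : d.edge ∈ S \ G.sysEdges Ps) (hfst : d.fst ∉ A) :
    IsPartialAugmentation A B S F d.snd Ps (insert d D) where
  isABSystem := h.isABSystem
  edge_mem := Set.forall_mem_insert.2 ⟨hdS, h.edge_mem⟩
  reaches :=
    let ⟨a, ha, hD⟩ := h.reaches
    ⟨a, ha, (hD.mono (Set.subset_insert d D)).trans (.of_mem (Set.mem_insert d D))⟩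
  covers :=
    let ⟨e, hF, hD⟩ := h.covers
    ⟨e, hF, Set.forall_mem_insert.2 ⟨fun hA => absurd hA hfst, hD⟩⟩

theorem covers_reroute (hAB : Disjoint A B) (hF : F ⊆ G.edgeCut A) {P N : G.Path} (hP : P ∈ Ps)
    {k : Fin P.edges.length} (hk : (P.dart k).fst ∉ A)
    (h : IsPartialAugmentation A B S F v Ps D) (hN : G.IsABPath A B N)
    (hND : N.darts ⊆ D ∪ P.dart '' Set.Ioi k) :
    ∃ e, F ⊆ insert e (G.sysEdges (insert N (Ps \ {P}))) ∧
      ∀ d ∈ P.dart '' Set.Iio k, d.fst ∈ A → d.edge = e := by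
  have hPAB := h.isABSystem.isABPath P hP
  obtain ⟨e, hFe, hDe⟩ := h.covers
  obtain ⟨_, ⟨i, hik, rfl⟩, hiA, -⟩ := (Path.reaches_dart_fst k).exists_crossing hPAB.1 hk
  have hPi : ∀ j, (P.dart j).fst ∈ A → (P.dart j).edge = (P.dart i).edge := fun j hj =>
    congrArg Dart.edge (hPAB.dart_eq_of_fst_mem hAB ⟨j, rfl⟩ ⟨i, rfl⟩ hj hiA)
  have heN : e ∈ N.edges := by
    obtain ⟨d, hd, hdA⟩ := hN.exists_dart_fst_mem hAB
    rcases hND hd with hdD | ⟨j, hj, rfl⟩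
    · exact hDe d hdD hdA ▸ Path.edge_mem_edges hd
    · obtain rfl := Path.dart_edge_injective (hPi j hdA)
      exact absurd (Set.mem_Ioi.1 hj) (lt_asymm hik)
  refine ⟨(P.dart i).edge, fun x hx => ?_, ?_⟩
  · rw [sysEdges_insert, sysEdges_diff_singleton h.isABSystem.edgeDisjoint hP]
    rcases hFe hx with rfl | hxPs
    · exact .inr (.inl heN)
    · by_cases hxP : x ∈ P.edges
      · obtain ⟨_, ⟨j, rfl⟩, rfl⟩ := Path.mem_edges_iff.1 hxP
        exact .inl (hPi j ((hPAB.edge_mem_edgeCut_iff hAB ⟨j, rfl⟩).1 (hF hx)))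
      · exact .inr (.inr ⟨hxPs, hxP⟩)
  · rintro _ ⟨j, -, rfl⟩
    exact hPi j

/-- Running against the `k`-th dart of a path `P`, the open end joins the rest of `P`, and the
initial part of `P` becomes the new open end. -/
theorem exists_reroute (hAB : Disjoint A B) (hF : F ⊆ G.edgeCut A) {P : G.Path} (hP : P ∈ Ps)
    {k : Fin P.edges.length} (hk : (P.dart k).fst ∉ A)
    (h : IsPartialAugmentation A B S F (P.dart k).snd Ps D) :
    ∃ N : G.Path, N.darts ⊆ D ∪ P.darts ∧ IsPartialAugmentation A B S F (P.dart k).fst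
      (insert N (Ps \ {P})) (P.dart '' Set.Iio k) := by
  have hPAB := h.isABSystem.isABPath P hP
  obtain ⟨a, ha, hD⟩ := h.reaches
  obtain ⟨N, hN, hND⟩ := exists_abPath_of_reaches hAB ha hPAB.2.1 <|
    (hD.mono Set.subset_union_left).trans ((Path.reaches_dart_snd k).mono Set.subset_union_right)
  have hNS : N.edgeSet ⊆ S \ (G.sysEdges Ps \ P.edgeSet) := by
    intro x hx
    obtain ⟨d, hd, rfl⟩ := Path.mem_edges_iff.1 hx
    rcases hND hd with hdD | ⟨j, -, rfl⟩
    · exact ⟨(h.edge_mem d hdD).1, fun hd => (h.edge_mem d hdD).2 hd.1⟩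
    · have hj := Path.edge_mem_edges (P := P) ⟨j, rfl⟩
      exact ⟨h.isABSystem.edge_mem hP hj, fun hd => hd.2 hj⟩
  refine ⟨N, hND.trans (Set.union_subset_union_right D (Set.image_subset_range _ _)),
    h.isABSystem.replace hP hN hNS, ?_, ⟨P.first, hPAB.1, Path.reaches_dart_fst k⟩,
    h.covers_reroute hAB hF hP hk hN hND⟩
  rintro _ ⟨j, hj, rfl⟩
  have hjP := Path.edge_mem_edges (P := P) ⟨j, rfl⟩
  rw [sysEdges_insert, sysEdges_diff_singleton h.isABSystem.edgeDisjoint hP]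
  refine ⟨h.isABSystem.edge_mem hP hjP, not_or.2 ⟨fun hjN => ?_, fun hj => hj.2 hjP⟩⟩
  obtain ⟨d, hd, hdj⟩ := Path.mem_edges_iff.1 hjN
  rcases hND hd with hdD | ⟨i, hi, rfl⟩
  · exact (h.edge_mem d hdD).2 (hdj ▸ edgeSet_subset_sysEdges hP hjP)
  · obtain rfl := Path.dart_edge_injective hdj
    exact lt_asymm (Set.mem_Ioi.1 hi) hj

theorem exists_step (hAB : Disjoint A B) (hF : F ⊆ G.edgeCut A) {d : G.Dart}
    (h : IsPartialAugmentation A B S F d.fst Ps D) (hdS : d.edge ∈ S) (hfst : d.fst ∉ A)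
    (hsnd : d.snd ∉ A) (hd : d ∉ sysDarts Ps) :
    ∃ Ps' D', IsPartialAugmentation A B S F d.snd Ps' D' ∧
      D' ∪ sysDarts Ps' ⊆ insert d (D ∪ sysDarts Ps) := by
  by_cases hdPs : d.edge ∈ G.sysEdges Ps
  · obtain ⟨P, hP, hdP⟩ := mem_sysEdges.1 hdPs
    obtain ⟨_, ⟨k, rfl⟩, hk⟩ := Path.mem_edges_iff.1 hdP
    have hPsub : P.darts ⊆ sysDarts Ps := Set.subset_biUnion_of_mem hP
    obtain rfl | hkd := Dart.eq_or_eq_symm_of_edge_eq hk.symm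
    · exact absurd (hPsub ⟨k, rfl⟩) hd
    · subst hkd
      obtain ⟨N, hND, hN⟩ := h.exists_reroute hAB hF hP hsnd
      refine ⟨_, _, hN, fun d hd => .inr ?_⟩
      rcases hd with ⟨j, -, rfl⟩ | hd
      · exact .inr (hPsub ⟨j, rfl⟩)
      · obtain ⟨Q, rfl | hQ, hdQ⟩ := mem_sysDarts.1 hd
        · exact Set.union_subset_union_right D hPsub (hND hdQ)
        · exact .inr (mem_sysDarts.2 ⟨Q, hQ.1, hdQ⟩)
  · exact ⟨Ps, insert d D, h.insert_dart ⟨hdS, hdPs⟩ hfst, (Set.insert_union ..).subset⟩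

theorem exists_isABSystem (hAB : Disjoint A B) (h : IsPartialAugmentation A B S F v Ps D)
    (hv : v ∈ B) : ∃ Ps', G.IsABSystem A B S Ps' ∧ F ⊆ G.sysEdges Ps' := by
  obtain ⟨a, ha, hD⟩ := h.reaches
  obtain ⟨e, hF, hDe⟩ := h.covers
  obtain ⟨N, hN, hND⟩ := exists_abPath_of_reaches hAB ha hv hD
  obtain ⟨d, hd, hdA⟩ := hN.exists_dart_fst_mem hAB
  have hNS : N.edgeSet ⊆ S \ G.sysEdges Ps := fun x hx => by
    obtain ⟨d, hd, rfl⟩ := Path.mem_edges_iff.1 hx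
    exact h.edge_mem d (hND hd)
  refine ⟨insert N Ps, h.isABSystem.insert_path hN hNS, hF.trans ?_⟩
  rw [sysEdges_insert, ← hDe d (hND hd) hdA]
  exact Set.insert_subset (.inl (Path.edge_mem_edges hd)) Set.subset_union_right

end IsPartialAugmentation

section Augmentation

variable {A B : Set V} {S F : Set E} {Ps : Set G.Path}

/-- The darts along which an `AB`-system may be augmented: those not traversed by its paths.
A dart running against one of the paths is allowed. -/
def residualDarts (A : Set V) (S : Set E) (Ps : Set G.Path) : Set G.Dart :=
  {d | d.edge ∈ S ∧ d.snd ∉ A ∧ d ∉ sysDarts Ps}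

theorem IsABSystem.edge_notMem_sysEdges_of_mem_residualDarts (hAB : Disjoint A B)
    (h : G.IsABSystem A B S Ps) {d : G.Dart} (hd : d ∈ residualDarts A S Ps) (hdA : d.fst ∈ A) :
    d.edge ∉ G.sysEdges Ps := by
  intro hdPs
  obtain ⟨P, hP, hdP⟩ := mem_sysEdges.1 hdPs
  obtain ⟨d', hd', hdd'⟩ := Path.mem_edges_iff.1 hdP
  rcases Dart.eq_or_eq_symm_of_edge_eq hdd' with rfl | rfl
  · exact hd.2.2 (mem_sysDarts.2 ⟨P, hP, hd'⟩)
  · exact (((isABPath_iff hAB).1 (h.isABPath P hP)).2.2 _ hd').2 hdA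

theorem IsABSystem.isPartialAugmentation_singleton (hAB : Disjoint A B)
    (h : G.IsABSystem A B S Ps) {d : G.Dart} (hd : d ∈ residualDarts A S Ps) (hdA : d.fst ∈ A) :
    IsPartialAugmentation A B S (insert d.edge (G.edgeCut A ∩ G.sysEdges Ps)) d.snd Ps {d} where
  isABSystem := h
  edge_mem := by
    rintro _ rfl
    exact ⟨hd.1, h.edge_notMem_sysEdges_of_mem_residualDarts hAB hd hdA⟩
  reaches := ⟨d.fst, hdA, .of_mem rfl⟩
  covers := ⟨d.edge, Set.insert_subset_insert Set.inter_subset_right,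
    fun _ hd' _ => congrArg Dart.edge hd'⟩

theorem IsABSystem.exists_isPartialAugmentation (hAB : Disjoint A B)
    (h : G.IsABSystem A B S Ps) {W : G.Path} (hW : G.IsABPath A B W)
    (hWres : W.darts ⊆ residualDarts A S Ps) {e : E} (he : e ∈ W.edges) (heA : e ∈ G.edgeCut A)
    (i : Fin W.edges.length) :
    ∃ Ps' D, IsPartialAugmentation A B S (insert e (G.edgeCut A ∩ G.sysEdges Ps))
      (W.dart i).snd Ps' D ∧ D ∪ sysDarts Ps' ⊆ W.dart '' Set.Iic i ∪ sysDarts Ps := by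
  obtain ⟨i, hi⟩ := i
  induction i with
  | zero =>
    have h0 : (W.dart ⟨0, hi⟩).fst ∈ A := W.vert_zero.symm.subst (motive := (· ∈ A)) hW.1
    have he0 : (W.dart ⟨0, hi⟩).edge = e := hW.subsingleton_edgeCut_left hAB
      ⟨Path.edge_mem_edges ⟨_, rfl⟩, (hW.edge_mem_edgeCut_iff hAB ⟨_, rfl⟩).2 h0⟩ ⟨he, heA⟩
    refine ⟨Ps, {W.dart ⟨0, hi⟩}, ?_, Set.union_subset_union_left _ ?_⟩
    · exact he0 ▸ h.isPartialAugmentation_singleton hAB (hWres ⟨_, rfl⟩) h0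
    · exact Set.singleton_subset_iff.2 ⟨_, Set.self_mem_Iic, rfl⟩
  | succ i ih =>
    obtain ⟨Ps', D, hD, hsub⟩ := ih (Nat.lt_of_succ_lt hi)
    have hWi := hWres ⟨⟨i + 1, hi⟩, rfl⟩
    have hnew : W.dart ⟨i + 1, hi⟩ ∉ sysDarts Ps' := by
      rintro hmem
      rcases hsub (.inr hmem) with ⟨j, hj, hij⟩ | hPs
      · obtain rfl := Path.dart_edge_injective (congrArg Dart.edge hij)
        exact absurd (Fin.le_def.1 hj) (Nat.not_succ_le_self i)
      · exact hWi.2.2 hPs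
    obtain ⟨Ps'', D', hD', hsub'⟩ := hD.exists_step (d := W.dart ⟨i + 1, hi⟩) hAB
      (Set.insert_subset heA Set.inter_subset_left) hWi.1
      (hWres ⟨⟨i, Nat.lt_of_succ_lt hi⟩, rfl⟩).2.1 hWi.2.1 hnew
    refine ⟨Ps'', D', hD', hsub'.trans (Set.insert_subset (.inl ⟨_, Set.self_mem_Iic, rfl⟩) ?_)⟩
    refine hsub.trans (Set.union_subset_union_left _ (Set.image_mono fun j hj => ?_))
    exact le_trans hj (Fin.le_def.2 (Nat.le_succ i))

theorem IsABSystem.exists_augmentation (hAB : Disjoint A B)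
    (h : G.IsABSystem A B S Ps) {a b : V} (ha : a ∈ A) (hb : b ∈ B)
    (hab : Reaches (residualDarts A S Ps) a b) :
    ∃ e ∈ (G.edgeCut A ∩ S) \ G.sysEdges Ps, ∃ Ps', G.IsABSystem A B S Ps' ∧
      insert e (G.edgeCut A ∩ G.sysEdges Ps) ⊆ G.sysEdges Ps' := by
  obtain ⟨W, hW, hWres⟩ := exists_abPath_of_reaches hAB ha hb hab
  obtain ⟨d, hd, hdA⟩ := hW.exists_dart_fst_mem hAB
  have hcut := (hW.edge_mem_edgeCut_iff hAB hd).2 hdA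
  have hpos : 0 < W.edges.length := List.length_pos_of_mem (Path.edge_mem_edges hd)
  obtain ⟨Ps', D, hD, -⟩ := h.exists_isPartialAugmentation hAB hW hWres (Path.edge_mem_edges hd)
    hcut ⟨W.edges.length - 1, Nat.sub_lt hpos one_pos⟩
  have hlast : (W.dart ⟨W.edges.length - 1, Nat.sub_lt hpos one_pos⟩).snd = W.last := by
    rw [← W.vert_last]
    exact congrArg W.vert (Fin.ext (Nat.sub_add_cancel hpos))
  exact ⟨d.edge, ⟨⟨hcut, (hWres hd).1⟩,
    h.edge_notMem_sysEdges_of_mem_residualDarts hAB (hWres hd) hdA⟩,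
    hD.exists_isABSystem hAB (hlast ▸ hW.2.1)⟩

theorem IsABSystem.orthogonal_of_residual_closed (h : G.IsABSystem A B S Ps)
    {X : Set V} (hAX : A ⊆ X) (hXB : Disjoint X B)
    (hX : ∀ d ∈ residualDarts A S Ps, d.fst ∈ X → d.snd ∈ X) :
    G.Orthogonal (G.edgeCut X ∩ S) Ps := by
  have hout : ∀ P ∈ Ps, ∀ d ∈ P.darts, d.snd ∈ X → d.fst ∈ X := by
    intro P hP d hd hsnd
    have hdS : d.edge ∈ S := h.edge_mem hP (Path.edge_mem_edges hd)
    by_contra hfst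
    refine hfst (hX d.symm ⟨hdS, fun hA => hfst (hAX hA), ?_⟩ hsnd)
    intro hsymm
    obtain ⟨Q, hQ, hdQ⟩ := mem_sysDarts.1 hsymm
    obtain rfl := h.edgeDisjoint.eq_of_mem hP hQ
      (Path.edge_mem_edges hd) (Path.edge_mem_edges (d := d.symm) hdQ)
    exact Path.symm_notMem_darts hd hdQ
  constructor
  · intro P hP
    obtain ⟨hfirst, hlast, -⟩ := h.isABPath P hP
    obtain ⟨d, hd, hdX, hdX'⟩ := P.reaches.exists_crossing (hAX hfirst)
      (hXB.notMem_of_mem_right hlast)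
    have hcut := d.edge_mem_edgeCut_iff.2 (iff_of_true hdX hdX')
    have hdP := Path.edge_mem_edges hd
    exact ⟨d.edge, ⟨⟨hcut, h.edge_mem hP hdP⟩, hdP⟩, fun e he =>
      Path.subsingleton_edgeSet_inter_edgeCut (hout P hP) ⟨he.2, he.1.1⟩ ⟨hdP, hcut⟩⟩
  · rintro e ⟨heX, heS⟩
    obtain ⟨d, rfl, hfst, hsnd⟩ := exists_dart_of_mem_edgeCut heX
    by_contra hunc
    refine hsnd (hX d ⟨heS, fun hA => hsnd (hAX hA), fun hd => ?_⟩ hfst)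
    obtain ⟨P, hP, hdP⟩ := mem_sysDarts.1 hd
    exact hunc ⟨P, hP, Path.edge_mem_edges hdP⟩

theorem IsABSystem.exists_augmentation_or_orthogonal (hAB : Disjoint A B)
    (h : G.IsABSystem A B S Ps) :
    (∃ e ∈ (G.edgeCut A ∩ S) \ G.sysEdges Ps, ∃ Ps', G.IsABSystem A B S Ps' ∧
      insert e (G.edgeCut A ∩ G.sysEdges Ps) ⊆ G.sysEdges Ps') ∨
    ∃ X, A ⊆ X ∧ Disjoint X B ∧ G.Orthogonal (G.edgeCut X ∩ S) Ps := by
  set X := {v | ∃ a ∈ A, Reaches (residualDarts A S Ps) a v}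
  by_cases hXB : Disjoint X B
  · have hAX : A ⊆ X := fun a ha => ⟨a, ha, .refl⟩
    refine .inr ⟨X, hAX, hXB, h.orthogonal_of_residual_closed hAX hXB ?_⟩
    rintro d hd ⟨a, ha, had⟩
    exact ⟨a, ha, had.trans (.of_mem hd)⟩
  · obtain ⟨b, ⟨a, ha, hab⟩, hb⟩ := Set.not_disjoint_iff.1 hXB
    exact .inl (h.exists_augmentation hAB ha hb hab)

end Augmentation

section Cuts

variable {A B A' B' X : Set V} {S C : Set E} {Ps : Set G.Path} {P : G.Path}

theorem IsABPath.exists_mem_edgeCut (hP : G.IsABPath A B P) (hAX : A ⊆ X) (hXB : Disjoint X B) :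
    ∃ e ∈ G.edgeCut X, e ∈ P.edges :=
  let ⟨d, hd, hfst, hsnd⟩ := P.reaches.exists_crossing (hAX hP.1)
    (hXB.notMem_of_mem_right hP.2.1)
  ⟨d.edge, d.edge_mem_edgeCut_iff.2 (iff_of_true hfst hsnd), Path.edge_mem_edges hd⟩

theorem IsABSystem.isEMABCut_of_orthogonal (h : G.IsABSystem A B S Ps) (hAX : A ⊆ X)
    (hXB : Disjoint X B) (horth : G.Orthogonal (G.edgeCut X) Ps) :
    G.IsEMABCut A B (G.edgeCut X) :=
  ⟨fun _ hP => hP.exists_mem_edgeCut hAX hXB, Ps, h.edgeDisjoint, h.isABPath, horth⟩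

theorem Orthogonal.eq_of_mem (h : G.Orthogonal C Ps) (hP : P ∈ Ps) {e e' : E} (he : e ∈ C)
    (he' : e' ∈ C) (heP : e ∈ P.edges) (heP' : e' ∈ P.edges) : e = e' :=
  (h.1 P hP).unique ⟨he, heP⟩ ⟨he', heP'⟩

theorem Orthogonal.insert_path (h : G.Orthogonal C Ps) {f : E} (hf : f ∉ G.sysEdges Ps)
    (hfP : f ∈ P.edges) (hP : ∀ e ∈ C, e ∉ P.edges) : G.Orthogonal (insert f C) (insert P Ps) := by
  refine ⟨Set.forall_mem_insert.2 ⟨⟨f, ⟨.inl rfl, hfP⟩, ?_⟩, fun Q hQ => ?_⟩,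
    Set.forall_mem_insert.2 ⟨⟨P, .inl rfl, hfP⟩, fun e he => ?_⟩⟩
  · rintro e ⟨rfl | he, heP⟩
    · rfl
    · exact absurd heP (hP e he)
  · obtain ⟨e, ⟨he, heQ⟩, huniq⟩ := h.1 Q hQ
    refine ⟨e, ⟨.inr he, heQ⟩, ?_⟩
    rintro e' ⟨rfl | he', heQ'⟩
    · exact absurd (edgeSet_subset_sysEdges hQ heQ') hf
    · exact huniq e' ⟨he', heQ'⟩
  · obtain ⟨Q, hQ, heQ⟩ := h.2 e he
    exact ⟨Q, .inr hQ, heQ⟩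

theorem IsABSystem.orthogonal_of_diff_singleton (h : G.IsABSystem A B S Ps) (hP : P ∈ Ps) {f : E}
    (hfP : f ∈ P.edges) (hAX : A ⊆ X) (hXB : Disjoint X B)
    (horth : G.Orthogonal (G.edgeCut X ∩ (S \ {f})) (Ps \ {P})) :
    f ∈ G.edgeCut X ∩ S ∧ G.Orthogonal (G.edgeCut X ∩ S) Ps := by
  have hPX : ∀ e ∈ G.edgeCut X ∩ (S \ {f}), e ∉ P.edges := fun e he heP =>
    let ⟨Q, hQ, heQ⟩ := horth.2 e he
    hQ.2 (h.edgeDisjoint.eq_of_mem hQ.1 hP heQ heP)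
  obtain ⟨e, heX, heP⟩ := (h.isABPath P hP).exists_mem_edgeCut hAX hXB
  obtain rfl : e = f := not_not.1 fun hef => hPX e ⟨heX, h.edge_mem hP heP, hef⟩ heP
  have heS : e ∈ G.edgeCut X ∩ S := ⟨heX, h.edge_mem hP heP⟩
  have he : e ∉ G.sysEdges (Ps \ {P}) := by
    rw [sysEdges_diff_singleton h.edgeDisjoint hP]
    exact fun he => he.2 heP
  refine ⟨heS, ?_⟩
  have hins := horth.insert_path he heP hPX
  rwa [Set.insert_sdiff_self_of_mem hP, ← Set.inter_sdiff_assoc,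
    Set.insert_sdiff_self_of_mem heS] at hins

theorem IsABSystem.exists_deletion_or_orthogonal (hAB : Disjoint A B) (h : G.IsABSystem A B S Ps)
    (hcov : G.edgeCut A ∩ S ⊆ G.sysEdges Ps) (f : E) :
    (∃ Ps', G.IsABSystem A B (S \ {f}) Ps' ∧ G.edgeCut A ∩ (S \ {f}) ⊆ G.sysEdges Ps') ∨
    f ∉ G.edgeCut A ∧ ∃ X, A ⊆ X ∧ Disjoint X B ∧ f ∈ G.edgeCut X ∩ S ∧
      G.Orthogonal (G.edgeCut X ∩ S) Ps := by
  by_cases hf : f ∈ G.sysEdges Ps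
  swap
  · refine .inl ⟨Ps, h.of_subset subset_rfl fun e he => ⟨h.sysEdges_subset he, ?_⟩,
      fun e he => hcov ⟨he.1, he.2.1⟩⟩
    rintro rfl
    exact hf he
  obtain ⟨P, hP, hfP⟩ := mem_sysEdges.1 hf
  have hdiff := sysEdges_diff_singleton h.edgeDisjoint hP
  have hQs : G.IsABSystem A B (S \ {f}) (Ps \ {P}) := by
    refine h.of_subset Set.sdiff_subset ?_
    rw [hdiff]
    exact fun e he => ⟨h.sysEdges_subset he.1, fun hef => he.2 (hef ▸ hfP)⟩
  have hsub := (h.isABPath P hP).subsingleton_edgeCut_left hAB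
  by_cases hfA : f ∈ G.edgeCut A
  · refine .inl ⟨_, hQs, fun e he => ?_⟩
    rw [hdiff]
    exact ⟨hcov ⟨he.1, he.2.1⟩, fun heP => he.2.2 (hsub ⟨heP, he.1⟩ ⟨hfP, hfA⟩)⟩
  rcases hQs.exists_augmentation_or_orthogonal hAB with ⟨e, ⟨heA, heQs⟩, Ps', hPs', hcov'⟩ |
    ⟨X, hAX, hXB, horth⟩
  · refine .inl ⟨Ps', hPs', fun x hx => hcov' ?_⟩
    rw [hdiff] at heQs ⊢
    have heP : e ∈ P.edgeSet := not_not.1 fun heP => heQs ⟨hcov ⟨heA.1, heA.2.1⟩, heP⟩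
    by_cases hxP : x ∈ P.edgeSet
    · exact .inl (hsub ⟨hxP, hx.1⟩ ⟨heP, heA.1⟩)
    · exact .inr ⟨hx.1, hcov ⟨hx.1, hx.2.1⟩, hxP⟩
  · exact .inr ⟨hfA, X, hAX, hXB, h.orthogonal_of_diff_singleton hP hfP hAX hXB horth⟩

theorem IsABSystem.exists_trim (h : G.IsABSystem A B S Ps) (hA : A ⊆ A') (hB : B ⊆ B')
    (hAB' : Disjoint A' B') :
    ∃ φ : G.Path → G.Path, (∀ P ∈ Ps, (φ P).edgeSet ⊆ P.edgeSet) ∧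
      G.IsABSystem A' B' S (φ '' Ps) := by
  have hsub : ∀ P ∈ Ps, ∃ Q : G.Path, Q.edgeSet ⊆ P.edgeSet ∧ G.IsABPath A' B' Q := by
    intro P hP
    obtain ⟨Q, hQ, hQP⟩ := exists_abPath_of_reaches hAB' (hA (h.isABPath P hP).1)
      (hB (h.isABPath P hP).2.1) P.reaches
    exact ⟨Q, fun e he =>
      let ⟨d, hd, hde⟩ := Path.mem_edges_iff.1 he
      Path.mem_edges_iff.2 ⟨d, hQP hd, hde⟩, hQ⟩
  choose! φ hφ hφAB using hsub
  refine ⟨φ, hφ, ?_, Set.forall_mem_image.2 hφAB, fun e he => ?_⟩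
  · rintro _ ⟨P, hP, rfl⟩ _ ⟨Q, hQ, rfl⟩ hne e heP heQ
    exact hne (congrArg φ (h.edgeDisjoint.eq_of_mem hP hQ (hφ P hP heP) (hφ Q hQ heQ)))
  · obtain ⟨_, ⟨P, hP, rfl⟩, heP⟩ := mem_sysEdges.1 he
    exact h.edge_mem hP (hφ P hP heP)

theorem Orthogonal.subset_sysEdges_image {φ : G.Path → G.Path}
    (horth : G.Orthogonal (G.edgeCut X ∩ S) Ps) (hφ : ∀ P ∈ Ps, (φ P).edgeSet ⊆ P.edgeSet)
    (h : G.IsABSystem A' B' S (φ '' Ps)) (hAX : A' ⊆ X) (hXB : Disjoint X B') :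
    G.edgeCut X ∩ S ⊆ G.sysEdges (φ '' Ps) := by
  intro e he
  obtain ⟨P, hP, heP⟩ := horth.2 e he
  have hφP := Set.mem_image_of_mem φ hP
  obtain ⟨e', heX', heP'⟩ := (h.isABPath _ hφP).exists_mem_edgeCut hAX hXB
  obtain rfl := horth.eq_of_mem hP he ⟨heX', h.edge_mem hφP heP'⟩ heP (hφ P hP heP')
  exact edgeSet_subset_sysEdges hφP heP'

theorem Orthogonal.of_image {φ : G.Path → G.Path} (hdisj : G.EdgeDisjoint Ps)
    (hφ : ∀ P ∈ Ps, (φ P).edgeSet ⊆ P.edgeSet) (horth : G.Orthogonal C (φ '' Ps)) :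
    G.Orthogonal C Ps := by
  have hmem : ∀ e ∈ C, ∀ P ∈ Ps, e ∈ P.edges → e ∈ (φ P).edges := by
    intro e he P hP heP
    obtain ⟨_, ⟨Q, hQ, rfl⟩, heQ⟩ := horth.2 e he
    rwa [hdisj.eq_of_mem hP hQ heP (hφ Q hQ heQ)]
  refine ⟨fun P hP => ?_, fun e he => ?_⟩
  · obtain ⟨e, ⟨he, heP⟩, -⟩ := horth.1 _ (Set.mem_image_of_mem φ hP)
    exact ⟨e, ⟨he, hφ P hP heP⟩, fun e' he' => horth.eq_of_mem (Set.mem_image_of_mem φ hP) he'.1 he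
      (hmem e' he'.1 P hP he'.2) heP⟩
  · obtain ⟨_, ⟨P, hP, rfl⟩, heP⟩ := horth.2 e he
    exact ⟨P, hP, hφ P hP heP⟩

end Cuts

section Glue

variable {A B X : Set V} {p q : G.Path} {d : G.Dart} {Ps Qs : Set G.Path}

theorem IsABPath.fst_mem_of_mem_darts (hAX : A ⊆ X) (hp : G.IsABPath A Xᶜ p) (hd : d ∈ p.darts) :
    d.fst ∈ X :=
  not_not.1 (((isABPath_iff (Set.disjoint_compl_right_iff_subset.2 hAX)).1 hp).2.2 d hd).1

theorem IsABPath.snd_notMem_of_mem_darts (hXB : Disjoint X B) (hq : G.IsABPath X B q)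
    (hd : d ∈ q.darts) : d.snd ∉ X :=
  (((isABPath_iff hXB).1 hq).2.2 d hd).2

theorem IsABPath.mem_darts_of_fst_mem (hXB : Disjoint X B) (hq : G.IsABPath X B q)
    (hd : d.edge ∈ q.edges) (hfst : d.fst ∈ X) : d ∈ q.darts := by
  obtain ⟨d', hd', hdd'⟩ := Path.mem_edges_iff.1 hd
  obtain rfl | rfl := d'.eq_or_eq_symm_of_edge_eq hdd'
  · exact hd'
  · exact absurd hfst (hq.snd_notMem_of_mem_darts hXB hd')

theorem IsABPath.mem_darts_of_snd_notMem (hAX : A ⊆ X) (hp : G.IsABPath A Xᶜ p)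
    (hd : d.edge ∈ p.edges) (hsnd : d.snd ∉ X) : d ∈ p.darts := by
  obtain ⟨d', hd', hdd'⟩ := Path.mem_edges_iff.1 hd
  obtain rfl | rfl := d'.eq_or_eq_symm_of_edge_eq hdd'
  · exact hd'
  · exact absurd (hp.fst_mem_of_mem_darts hAX hd') hsnd

theorem IsABPath.mem_edgeCut_of_mem_edges (hAX : A ⊆ X) (hXB : Disjoint X B)
    (hp : G.IsABPath A Xᶜ p) (hq : G.IsABPath X B q) {e : E} (hep : e ∈ p.edges)
    (heq : e ∈ q.edges) : e ∈ G.edgeCut X := by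
  obtain ⟨d, hd, rfl⟩ := Path.mem_edges_iff.1 hep
  have hfst := hp.fst_mem_of_mem_darts hAX hd
  exact d.edge_mem_edgeCut_iff.2 (iff_of_true hfst
    (hq.snd_notMem_of_mem_darts hXB (hq.mem_darts_of_fst_mem hXB heq hfst)))

theorem IsABPath.subsingleton_edgeCut_right (hAX : A ⊆ X) (hp : G.IsABPath A Xᶜ p) :
    (p.edgeSet ∩ G.edgeCut X).Subsingleton :=
  p.subsingleton_edgeSet_inter_edgeCut fun _ hd _ => hp.fst_mem_of_mem_darts hAX hd

theorem IsABPath.exists_concat (hAX : A ⊆ X) (hXB : Disjoint X B) (hp : G.IsABPath A Xᶜ p)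
    (hq : G.IsABPath X B q) {e : E} (he : e ∈ G.edgeCut X) (hep : e ∈ p.edges)
    (heq : e ∈ q.edges) :
    ∃ N : G.Path, G.IsABPath A B N ∧ N.edgeSet ⊆ p.edgeSet ∪ q.edgeSet := by
  obtain ⟨d, rfl, hfst, hsnd⟩ := exists_dart_of_mem_edgeCut he
  obtain ⟨i, rfl⟩ := hp.mem_darts_of_snd_notMem hAX hep hsnd
  obtain ⟨j, hj⟩ := hq.mem_darts_of_fst_mem hXB heq hfst
  have hreach : Reaches (p.darts ∪ q.darts) p.first q.last :=
    ((p.reaches_dart_fst i).mono ((Set.image_subset_range _ _).trans Set.subset_union_left)).trans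
      ((Reaches.of_mem (.inl ⟨i, rfl⟩)).trans (hj ▸ (q.reaches_dart_snd j).mono
        ((Set.image_subset_range _ _).trans Set.subset_union_right)))
  obtain ⟨N, hN, hNpq⟩ := exists_abPath_of_reaches (hXB.mono_left hAX) hp.1 hq.2.1 hreach
  refine ⟨N, hN, fun e he => ?_⟩
  obtain ⟨d, hd, hde⟩ := Path.mem_edges_iff.1 he
  exact (hNpq hd).imp (fun h => Path.mem_edges_iff.2 ⟨d, h, hde⟩)
    (fun h => Path.mem_edges_iff.2 ⟨d, h, hde⟩)

theorem IsABSystem.eq_of_mem_concat (hAX : A ⊆ X) (hXB : Disjoint X B)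
    (hPs : G.IsABSystem A Xᶜ Set.univ Ps) (hQs : G.IsABSystem X B Set.univ Qs) {p' q' : G.Path}
    (hp : p ∈ Ps) (hp' : p' ∈ Ps) (hq : q ∈ Qs) (hq' : q' ∈ Qs) {e e' x : E}
    (he : e ∈ p.edgeSet ∩ q.edgeSet) (he' : e' ∈ p'.edgeSet ∩ q'.edgeSet)
    (hx : x ∈ p.edgeSet ∪ q.edgeSet) (hx' : x ∈ p'.edgeSet ∪ q'.edgeSet) : e = e' := by
  have hcut : ∀ p ∈ Ps, ∀ q ∈ Qs, p.edgeSet ∩ q.edgeSet ⊆ G.edgeCut X := fun p hp q hq y hy =>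
    (hPs.isABPath p hp).mem_edgeCut_of_mem_edges hAX hXB (hQs.isABPath q hq) hy.1 hy.2
  have hpX : ∀ p ∈ Ps, (p.edgeSet ∩ G.edgeCut X).Subsingleton := fun p hp =>
    (hPs.isABPath p hp).subsingleton_edgeCut_right hAX
  have hqX : ∀ q ∈ Qs, (q.edgeSet ∩ G.edgeCut X).Subsingleton := fun q hq =>
    (hQs.isABPath q hq).subsingleton_edgeCut_left hXB
  have heX := hcut p hp q hq he
  have heX' := hcut p' hp' q' hq' he'
  rcases hx, hx' with ⟨hx | hx, hx' | hx'⟩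
  · obtain rfl := hPs.edgeDisjoint.eq_of_mem hp hp' hx hx'
    exact hpX p hp ⟨he.1, heX⟩ ⟨he'.1, heX'⟩
  · have hxX := hcut p hp q' hq' ⟨hx, hx'⟩
    exact (hpX p hp ⟨he.1, heX⟩ ⟨hx, hxX⟩).trans (hqX q' hq' ⟨hx', hxX⟩ ⟨he'.2, heX'⟩)
  · have hxX := hcut p' hp' q hq ⟨hx', hx⟩
    exact (hqX q hq ⟨he.2, heX⟩ ⟨hx, hxX⟩).trans (hpX p' hp' ⟨hx', hxX⟩ ⟨he'.1, heX'⟩)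
  · obtain rfl := hQs.edgeDisjoint.eq_of_mem hq hq' hx hx'
    exact hqX q hq ⟨he.2, heX⟩ ⟨he'.2, heX'⟩

theorem IsABSystem.isEMABCut_of_concat (hAX : A ⊆ X) (hXB : Disjoint X B)
    (hPs : G.IsABSystem A Xᶜ Set.univ Ps) (hPsX : G.edgeCut X ⊆ G.sysEdges Ps)
    (hQs : G.IsABSystem X B Set.univ Qs) (hQsX : G.edgeCut X ⊆ G.sysEdges Qs) :
    G.IsEMABCut A B (G.edgeCut X) := by
  have hconcat : ∀ e : G.edgeCut X, ∃ N : G.Path, G.IsABPath A B N ∧ ∃ p ∈ Ps, ∃ q ∈ Qs,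
      e.1 ∈ p.edgeSet ∩ q.edgeSet ∧ N.edgeSet ⊆ p.edgeSet ∪ q.edgeSet := by
    rintro ⟨e, he⟩
    obtain ⟨p, hp, hep⟩ := mem_sysEdges.1 (hPsX he)
    obtain ⟨q, hq, heq⟩ := mem_sysEdges.1 (hQsX he)
    obtain ⟨N, hN, hNpq⟩ := (hPs.isABPath p hp).exists_concat hAX hXB (hQs.isABPath q hq) he hep heq
    exact ⟨N, hN, p, hp, q, hq, ⟨hep, heq⟩, hNpq⟩
  choose N hN p hp q hq hepq hNpq using hconcat
  have hdisj : ∀ e e' x, x ∈ (N e).edges → x ∈ (N e').edges → e = e' := fun e e' x hx hx' =>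
    Subtype.ext <| hPs.eq_of_mem_concat hAX hXB hQs (hp e) (hp e') (hq e) (hq e') (hepq e) (hepq e')
      (hNpq e hx) (hNpq e' hx')
  have hmem : ∀ e e' : G.edgeCut X, e'.1 ∈ (N e).edges → e' = e := fun e e' he' =>
    Subtype.ext <| hPs.eq_of_mem_concat hAX hXB hQs (hp e') (hp e) (hq e') (hq e) (hepq e') (hepq e)
      (.inl (hepq e').1) (hNpq e he')
  have heN : ∀ e, e.1 ∈ (N e).edges := fun e =>
    let ⟨x, hx, hxN⟩ := (hN e).exists_mem_edgeCut hAX hXB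
    hmem e ⟨x, hx⟩ hxN ▸ hxN
  refine ⟨fun _ hP => hP.exists_mem_edgeCut hAX hXB, Set.range N, ?_, Set.forall_mem_range.2 hN,
    Set.forall_mem_range.2 fun e => ⟨e, ⟨e.2, heN e⟩, fun e' he' => ?_⟩,
    fun e he => ⟨N ⟨e, he⟩, ⟨_, rfl⟩, heN ⟨e, he⟩⟩⟩
  · rintro _ ⟨e, rfl⟩ _ ⟨e', rfl⟩ hne x hx hx'
    exact hne (congrArg N (hdisj e e' x hx hx'))
  · exact congrArg Subtype.val (hmem e ⟨e', he'.1⟩ he'.2)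

end Glue

section Parity

variable {A X R : Set V} {Ps C : Set G.Path}

theorem Path.finite_edgeSet (P : G.Path) : P.edgeSet.Finite :=
  List.finite_toSet P.edges

theorem finite_sysEdges (hPs : Ps.Finite) : (G.sysEdges Ps).Finite :=
  hPs.biUnion fun P _ => P.finite_edgeSet

theorem EdgeDisjoint.even_ncard_edgeCut (hPs : Ps.Finite) (hdisj : G.EdgeDisjoint Ps)
    (hR : ∀ P ∈ Ps, P.first ∈ R ↔ P.last ∈ R) : Even (G.sysEdges Ps ∩ G.edgeCut R).ncard := by
  induction Ps, hPs using Set.Finite.induction_on with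
  | empty => simp [sysEdges]
  | @insert P Ps hP hPs ih =>
    have hPPs : Disjoint (P.edgeSet ∩ G.edgeCut R) (G.sysEdges Ps ∩ G.edgeCut R) := by
      refine Set.disjoint_left.2 fun e heP hePs => ?_
      obtain ⟨Q, hQ, heQ⟩ := mem_sysEdges.1 hePs.1
      exact hP (hdisj.eq_of_mem (.inl rfl) (.inr hQ) heP.1 heQ ▸ hQ)
    rw [sysEdges_insert, Set.union_inter_distrib_right, Set.ncard_union_eq hPPs
      (P.finite_edgeSet.inter_of_left _) ((finite_sysEdges hPs).inter_of_left _)]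
    exact ((P.even_ncard_edgeCut_iff R).2 (hR P (.inl rfl))).add
      (ih (hdisj.mono (Set.subset_insert _ _)) fun Q hQ => hR Q (.inr hQ))

theorem Path.exists_reaches_of_mem_edgeCut {P : G.Path} {e : E} (heP : e ∈ P.edges)
    (heR : e ∈ G.edgeCut R) : ∃ x ∈ R, Reaches P.darts P.first x := by
  obtain ⟨_, ⟨i, rfl⟩, rfl⟩ := Path.mem_edges_iff.1 heP
  have hfst := (P.reaches_dart_fst i).mono (Set.image_subset_range _ _)
  by_cases hi : (P.dart i).fst ∈ R
  · exact ⟨_, hi, hfst⟩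
  · exact ⟨_, not_not.1 fun h => hi (((P.dart i).edge_mem_edgeCut_iff.1 heR).2 h),
      hfst.trans (Reaches.of_mem ⟨i, rfl⟩)⟩

/-- The darts inside `X` whose edges are not used by the system `Ps`. -/
def freeDarts (X : Set V) (Ps : Set G.Path) : Set G.Dart :=
  {d | d.fst ∈ X ∧ d.snd ∈ X ∧ d.edge ∉ G.sysEdges Ps}

theorem freeDarts_anti {Qs : Set G.Path} (h : Qs ⊆ Ps) : freeDarts X Ps ⊆ freeDarts X Qs :=
  fun _ hd => ⟨hd.1, hd.2.1, fun he => hd.2.2 (sysEdges_mono h he)⟩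

theorem mem_of_reaches_freeDarts {x y : V} (h : Reaches (freeDarts X Ps) x y) (hy : y ∈ X) :
    x ∈ X :=
  not_not.1 fun hx => by
    obtain ⟨d, hd, hfst, -⟩ := Reaches.exists_crossing (X := Xᶜ) h hx (not_not.2 hy)
    exact hfst hd.1

theorem edgeCut_setOf_reaches_freeDarts_subset {y : V} (hy : y ∈ X) :
    G.edgeCut {x | Reaches (freeDarts X Ps) x y} ⊆ G.edgeCut X ∪ G.sysEdges Ps := by
  intro e he
  obtain ⟨d, rfl, hfst, hsnd⟩ := exists_dart_of_mem_edgeCut he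
  have hfstX := mem_of_reaches_freeDarts hfst hy
  by_contra! hno
  rw [Set.mem_union, not_or] at hno
  have hsndX : d.snd ∈ X :=
    not_not.1 fun h => hno.1 (d.edge_mem_edgeCut_iff.2 (iff_of_true hfstX h))
  have hsymm : d.symm ∈ freeDarts X Ps := ⟨hsndX, hfstX, hno.2⟩
  exact hsnd ((Reaches.of_mem hsymm).trans hfst)

theorem IsABSystem.reaches_freeDarts_of_mem_edgeCut (hAX : A ⊆ X)
    (h : G.IsABSystem A Xᶜ Set.univ Ps) {P : G.Path} (hP : P ∈ Ps) {y : V} (hy : y ∈ X) {e : E}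
    (heP : e ∈ P.edges) (he : e ∈ G.edgeCut {x | Reaches (freeDarts X Ps) x y}) :
    Reaches (freeDarts X (Ps \ {P})) P.first y := by
  obtain ⟨x, hx, hPx⟩ := Path.exists_reaches_of_mem_edgeCut heP he
  have hPX : ∀ d ∈ P.darts, d.fst ∈ X := fun d hd => (h.isABPath P hP).fst_mem_of_mem_darts hAX hd
  refine ((hPx.inside hPX (mem_of_reaches_freeDarts hx hy)).mono fun d hd => ?_).trans
    (hx.mono (freeDarts_anti Set.sdiff_subset))
  refine ⟨hPX d hd.1, hd.2, ?_⟩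
  rw [sysEdges_diff_singleton h.edgeDisjoint hP]
  exact fun hdP => hdP.2 (Path.edge_mem_edges hd.1)

/- Otherwise the cut of the set `R` of vertices from which `d.fst` can be reached consists of
`d.edge` and of an even number of edges of paths in `C`. -/
theorem InnerEulerian.exists_reaches_freeDarts (hG : G.InnerEulerian) (hAX : A ⊆ X)
    (hT : X ∩ G.T ⊆ A) (h : G.IsABSystem A Xᶜ Set.univ Ps) {d : G.Dart} (hfst : d.fst ∈ X)
    (hsnd : d.snd ∉ X) (hd : d.edge ∉ G.sysEdges Ps)
    (hcov : G.edgeCut X ⊆ insert d.edge (G.sysEdges Ps)) (hC : C ⊆ Ps) (hCfin : C.Finite) :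
    ∃ Qs ⊆ Ps \ C, Qs.Subsingleton ∧ ∃ a ∈ A, Reaches (freeDarts X (Ps \ Qs)) a d.fst := by
  by_contra! hno
  set R := {x | Reaches (freeDarts X Ps) x d.fst}
  have hRX : R ⊆ X := fun x hx => mem_of_reaches_freeDarts hx hfst
  have hRA : ∀ a ∈ A, a ∉ R := fun a ha haR =>
    hno ∅ (Set.empty_subset _) Set.subsingleton_empty a ha (by rwa [Set.sdiff_empty])
  have hRC : G.edgeCut R ⊆ insert d.edge (G.sysEdges C) := by
    intro e he
    rw [Set.mem_insert_iff, or_iff_not_imp_left]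
    intro hed
    have hePs : e ∈ G.sysEdges Ps := (edgeCut_setOf_reaches_freeDarts_subset hfst he).elim
      (fun heX => (hcov heX).resolve_left hed) id
    obtain ⟨P, hP, heP⟩ := mem_sysEdges.1 hePs
    refine edgeSet_subset_sysEdges (not_not.1 fun hPC => ?_) heP
    exact hno {P} (Set.singleton_subset_iff.2 ⟨hP, hPC⟩) Set.subsingleton_singleton P.first
      (h.isABPath P hP).1 (h.reaches_freeDarts_of_mem_edgeCut hAX hP hfst heP he)
  have hdR : d.edge ∈ G.edgeCut R := d.edge_mem_edgeCut_iff.2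
    (iff_of_true Relation.ReflTransGen.refl fun h => hsnd (hRX h))
  have hR : G.edgeCut R = insert d.edge (G.sysEdges C ∩ G.edgeCut R) := by
    rw [← Set.insert_inter_of_mem hdR, Set.inter_eq_right.2 hRC]
  have hfin : (G.sysEdges C ∩ G.edgeCut R).Finite := (finite_sysEdges hCfin).inter_of_left _
  have heven : Even (G.sysEdges C ∩ G.edgeCut R).ncard :=
    EdgeDisjoint.even_ncard_edgeCut hCfin (Set.Pairwise.mono hC h.edgeDisjoint) fun P hP =>
      iff_of_false (hRA _ (h.isABPath P (hC hP)).1) fun hR => (h.isABPath P (hC hP)).2.1 (hRX hR)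
  refine hG R (Set.disjoint_left.2 fun x hx hxT => hRA x (hT ⟨hRX hx, hxT⟩) hx) ?_
  rw [hR, Set.ncard_insert_of_notMem (fun hd' => hd (sysEdges_mono hC hd'.1)) hfin]
  exact ⟨hfin.insert _, heven.add_one⟩

end Parity

section Linkage

variable {A X : Set V} {Ps C : Set G.Path}

/-- A system of edge-disjoint `A`–`Xᶜ` paths covering all edges of `δ(X)` with at most one
exception. -/
def IsAlmostLinkage (A X : Set V) (Ps : Set G.Path) : Prop :=
  G.IsABSystem A Xᶜ Set.univ Ps ∧ ∃ k, G.edgeCut X ⊆ insert k (G.sysEdges Ps)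

theorem IsABSystem.exists_edgeCut_subset_insert (hAX : A ⊆ X) (h : G.IsABSystem A Xᶜ Set.univ Ps)
    {Qs : Set G.Path} (hQs : Qs ⊆ Ps) (hQsub : Qs.Subsingleton) {k : E}
    (hcov : G.edgeCut X ⊆ insert k (G.sysEdges Ps)) :
    ∃ k', G.edgeCut X ⊆ insert k' (insert k (G.sysEdges (Ps \ Qs))) := by
  rcases hQsub.eq_empty_or_singleton with rfl | ⟨P, rfl⟩
  · exact ⟨k, by simpa using hcov⟩
  have hP : P ∈ Ps := hQs rfl
  have hdisj := Set.disjoint_compl_right_iff_subset.2 (subset_refl X)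
  obtain ⟨k', hk', hk'P⟩ := (h.isABPath P hP).exists_mem_edgeCut hAX hdisj
  refine ⟨k', fun e he => ?_⟩
  rw [sysEdges_diff_singleton h.edgeDisjoint hP]
  by_cases heP : e ∈ P.edges
  · exact .inl ((h.isABPath P hP).subsingleton_edgeCut_right hAX ⟨heP, he⟩ ⟨hk'P, hk'⟩)
  · exact .inr ((hcov he).imp_right fun hePs => ⟨hePs, heP⟩)

theorem IsAlmostLinkage.exists_exchange (hG : G.InnerEulerian) (hAX : A ⊆ X) (hT : X ∩ G.T ⊆ A)
    (h : IsAlmostLinkage A X Ps) (hC : C ⊆ Ps) (hCfin : C.Finite) {e : E} (he : e ∈ G.edgeCut X) :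
    ∃ Ps', IsAlmostLinkage A X Ps' ∧ C ⊆ Ps' ∧ e ∈ G.sysEdges Ps' := by
  by_cases hePs : e ∈ G.sysEdges Ps
  · exact ⟨Ps, h, hC, hePs⟩
  obtain ⟨hPs, k, hcov⟩ := h
  obtain rfl : e = k := (hcov he).resolve_right hePs
  obtain ⟨d, rfl, hfst, hsnd⟩ := exists_dart_of_mem_edgeCut he
  obtain ⟨Qs, hQs, hQsub, a, ha, hreach⟩ :=
    hG.exists_reaches_freeDarts hAX hT hPs hfst hsnd hePs hcov hC hCfin
  have hQsPs : G.IsABSystem A Xᶜ Set.univ (Ps \ Qs) :=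
    hPs.of_subset Set.sdiff_subset (Set.subset_univ _)
  obtain ⟨N, hN, hND⟩ := exists_abPath_of_reaches (D := insert d (freeDarts X (Ps \ Qs)))
    (Set.disjoint_compl_right_iff_subset.2 hAX) ha hsnd
    ((hreach.mono (Set.subset_insert _ _)).trans (Reaches.of_mem (.inl rfl)))
  have hNfree : N.edgeSet ⊆ Set.univ \ G.sysEdges (Ps \ Qs) := by
    intro e he
    obtain ⟨d', hd', rfl⟩ := Path.mem_edges_iff.1 he
    rcases hND hd' with rfl | hd'
    · exact ⟨trivial, fun hd => hePs (sysEdges_mono Set.sdiff_subset hd)⟩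
    · exact ⟨trivial, hd'.2.2⟩
  have hdN : d.edge ∈ N.edges := by
    obtain ⟨d', hd', -, hsnd'⟩ := N.reaches.exists_crossing (hAX hN.1) hN.2.1
    obtain rfl : d' = d := (hND hd').resolve_right fun h => hsnd' h.2.1
    exact Path.edge_mem_edges hd'
  obtain ⟨k, hk⟩ := hPs.exists_edgeCut_subset_insert hAX (hQs.trans Set.sdiff_subset) hQsub hcov
  refine ⟨insert N (Ps \ Qs), ⟨hQsPs.insert_path hN hNfree, k, hk.trans ?_⟩, fun P hP =>
    .inr ⟨hC hP, fun hPQ => (hQs hPQ).2 hP⟩, edgeSet_subset_sysEdges (.inl rfl) hdN⟩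
  rw [sysEdges_insert]
  exact Set.insert_subset_insert (Set.insert_subset (.inl hdN) Set.subset_union_right)

/- `L` is the union of an increasing sequence of finite subsets of members of `𝓕`, each chosen to
settle one more requirement; it need not be a member of `𝓕` itself. -/
theorem exists_fusion {α β : Type*} {𝓕 : Set (Set α)} (h𝓕 : 𝓕.Nonempty) {R : Set β}
    (hR : R.Countable) {r : β → α → Prop}
    (hstep : ∀ S ∈ 𝓕, ∀ C ⊆ S, C.Finite → ∀ b ∈ R, ∃ S' ∈ 𝓕, C ⊆ S' ∧ ∃ a ∈ S', r b a) :
    ∃ L : Set α, (∀ a ∈ L, ∀ a' ∈ L, ∃ S ∈ 𝓕, a ∈ S ∧ a' ∈ S) ∧ ∀ b ∈ R, ∃ a ∈ L, r b a := by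
  have := hR.toEncodable
  let 𝒟 : R → Order.Cofinal {C : Set α // C.Finite ∧ ∃ S ∈ 𝓕, C ⊆ S} := fun b =>
    { carrier := {C | ∃ a ∈ C.1, r b a}
      isCofinal := by
        rintro ⟨C, hCfin, S, hS, hC⟩
        obtain ⟨S', hS', hCS', a, ha, hr⟩ := hstep S hS C hC hCfin b b.2
        exact ⟨⟨insert a C, hCfin.insert a, S', hS', Set.insert_subset ha hCS'⟩,
          ⟨a, .inl rfl, hr⟩, Set.subset_insert a C⟩ }
  obtain ⟨S₀, hS₀⟩ := h𝓕
  let bot : {C : Set α // C.Finite ∧ ∃ S ∈ 𝓕, C ⊆ S} :=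
    ⟨∅, Set.finite_empty, S₀, hS₀, Set.empty_subset _⟩
  refine ⟨{a | ∃ C ∈ Order.idealOfCofinals bot 𝒟, a ∈ C.1}, ?_, fun b hb => ?_⟩
  · rintro a ⟨C, hC, ha⟩ a' ⟨C', hC', ha'⟩
    obtain ⟨⟨_, _, S, hS, hsub⟩, _, hCK, hC'K⟩ :=
      (Order.idealOfCofinals bot 𝒟).directed C hC C' hC'
    exact ⟨S, hS, hsub (hCK ha), hsub (hC'K ha')⟩
  · obtain ⟨C, ⟨a, ha, hr⟩, hC⟩ := Order.cofinal_meets_idealOfCofinals bot 𝒟 ⟨b, hb⟩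
    exact ⟨a, ⟨C, hC, ha⟩, hr⟩

theorem IsAlmostLinkage.exists_isABSystem (hG : G.InnerEulerian) (hAX : A ⊆ X)
    (hT : X ∩ G.T ⊆ A) (hX : (G.edgeCut X).Countable) (h : IsAlmostLinkage A X Ps) :
    ∃ Ls, G.IsABSystem A Xᶜ Set.univ Ls ∧ G.edgeCut X ⊆ G.sysEdges Ls := by
  obtain ⟨Ls, hdir, hcov⟩ := exists_fusion (𝓕 := {Ps : Set G.Path | IsAlmostLinkage A X Ps})
    ⟨Ps, h⟩ hX (r := fun e P => e ∈ P.edges) fun Qs hQs C hC hCfin e he =>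
      let ⟨Qs', hQs', hCQs', heQs'⟩ := hQs.exists_exchange hG hAX hT hC hCfin he
      ⟨Qs', hQs', hCQs', mem_sysEdges.1 heQs'⟩
  refine ⟨Ls, ⟨fun P hP Q hQ => ?_, fun P hP => ?_, Set.subset_univ _⟩, fun e he =>
    mem_sysEdges.2 (hcov e he)⟩
  · obtain ⟨Qs, hQs, hPQs, hQQs⟩ := hdir P hP Q hQ
    exact hQs.1.edgeDisjoint hPQs hQQs
  · obtain ⟨Qs, hQs, hPQs, -⟩ := hdir P hP P hP
    exact hQs.1.isABPath P hPQs

end Linkage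

section Deletion

variable {A B X : Set V} {S : Set E} {Ps : Set G.Path} {f g : E}

theorem IsABSystem.countable (hAB : Disjoint A B) (h : G.IsABSystem A B S Ps)
    (hA : (G.edgeCut A).Countable) : Ps.Countable := by
  have := hA.to_subtype
  choose φ hφA hφ using fun P : Ps => (h.isABPath P P.2).exists_mem_edgeCut subset_rfl hAB
  have hinj : Function.Injective fun P : Ps => (⟨φ P, hφA P⟩ : G.edgeCut A) := by
    intro P Q hPQ
    have hφPQ : φ P = φ Q := congrArg Subtype.val hPQ
    exact Subtype.ext (h.edgeDisjoint.eq_of_mem P.2 Q.2 (hφ P) (hφPQ ▸ hφ Q))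
  exact Set.countable_coe_iff.1 hinj.countable

theorem IsABSystem.countable_sysEdges (hAB : Disjoint A B) (h : G.IsABSystem A B S Ps)
    (hA : (G.edgeCut A).Countable) : (G.sysEdges Ps).Countable :=
  (h.countable hAB hA).biUnion fun P _ => P.finite_edgeSet.countable

theorem IsABSystem.exists_inner_linkage (hG : G.InnerEulerian) (hAX : A ⊆ X) (hXB : Disjoint X B)
    (hT : X ∩ G.T ⊆ A) (hA : (G.edgeCut A).Countable) (h : G.IsABSystem A B {f}ᶜ Ps)
    (horth : G.Orthogonal (G.edgeCut X ∩ {f}ᶜ) Ps) :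
    ∃ Ls, G.IsABSystem A Xᶜ Set.univ Ls ∧ G.edgeCut X ⊆ G.sysEdges Ls := by
  have hAXc : Disjoint A Xᶜ := Set.disjoint_compl_right_iff_subset.2 hAX
  obtain ⟨φ, hφ, hφPs⟩ := h.exists_trim subset_rfl hXB.subset_compl_left hAXc
  have hcov := horth.subset_sysEdges_image hφ hφPs hAX disjoint_compl_right
  have hins : G.edgeCut X ⊆ insert f (G.sysEdges (φ '' Ps)) := fun e he =>
    or_iff_not_imp_left.2 fun hef => hcov ⟨he, hef⟩
  have hX : (G.edgeCut X).Countable :=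
    ((hφPs.countable_sysEdges hAXc hA).insert f).mono hins
  exact IsAlmostLinkage.exists_isABSystem hG hAX hT hX
    ⟨hφPs.of_subset subset_rfl (Set.subset_univ _), f, hins⟩

theorem IsABSystem.exists_outer_linkage (hAX : A ⊆ X) (hXB : Disjoint X B)
    (huniq : ∀ C, G.IsEMABCut A B C → C = G.edgeCut A) (h : G.IsABSystem A B {f}ᶜ Ps)
    (horth : G.Orthogonal (G.edgeCut X ∩ {f}ᶜ) Ps) (hg : g ∈ G.edgeCut X ∩ {f}ᶜ)
    (hgA : g ∉ G.edgeCut A) :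
    ∃ Ls, G.IsABSystem X B Set.univ Ls ∧ G.edgeCut X ⊆ G.sysEdges Ls := by
  obtain ⟨φ, hφ, hφPs⟩ := h.exists_trim hAX subset_rfl hXB
  have hcov := horth.subset_sysEdges_image hφ hφPs subset_rfl hXB
  rcases (hφPs.of_subset subset_rfl (Set.subset_univ _)).exists_augmentation_or_orthogonal hXB with
    ⟨e, ⟨⟨heX, -⟩, he⟩, Ls, hLs, hLscov⟩ | ⟨Y, hXY, hYB, hYorth⟩
  · obtain rfl : e = f := not_not.1 fun hef => he (hcov ⟨heX, hef⟩)
    refine ⟨Ls, hLs, fun x hx => hLscov ?_⟩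
    exact or_iff_not_imp_left.2 fun hxe => ⟨hx, hcov ⟨hx, hxe⟩⟩
  · rw [Set.inter_univ] at hYorth
    have hYA : G.edgeCut Y = G.edgeCut A := huniq _ <| h.isEMABCut_of_orthogonal
      (hAX.trans hXY) hYB (hYorth.of_image h.edgeDisjoint hφ)
    have hAsub : G.edgeCut A ⊆ G.edgeCut X := fun e he =>
      edgeCut_inter_subset hAX hXY ⟨he, hYA ▸ he⟩
    obtain ⟨P, hP, hgP⟩ := horth.2 g hg
    obtain ⟨e, heA, heP⟩ := (h.isABPath P hP).exists_mem_edgeCut subset_rfl (hXB.mono_left hAX)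
    obtain rfl := horth.eq_of_mem hP hg ⟨hAsub heA, h.edge_mem hP heP⟩ hgP heP
    exact absurd heA hgA

theorem InnerEulerian.exists_linkage_compl_pair (hG : G.InnerEulerian) (hAB : Disjoint A B)
    (hT : G.T ⊆ A ∪ B) (hA : (G.edgeCut A).Countable) (hEM : G.IsEMABCut A B (G.edgeCut A))
    (huniq : ∀ C, G.IsEMABCut A B C → C = G.edgeCut A) (f g : E) :
    ∃ Ps, G.IsABSystem A B {f, g}ᶜ Ps ∧ G.edgeCut A ∩ {f, g}ᶜ ⊆ G.sysEdges Ps := by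
  obtain ⟨-, Ps₀, hdisj, hpath, horth₀⟩ := hEM
  have h₀ : G.IsABSystem A B Set.univ Ps₀ := ⟨hdisj, hpath, Set.subset_univ _⟩
  have hf : ∃ Ps, G.IsABSystem A B {f}ᶜ Ps ∧ G.edgeCut A ∩ {f}ᶜ ⊆ G.sysEdges Ps := by
    rw [Set.compl_eq_univ_sdiff]
    rcases h₀.exists_deletion_or_orthogonal hAB
      (fun e he => mem_sysEdges.2 (horth₀.2 e he.1)) f with hdel | ⟨hfA, X, hAX, hXB, hfX, horth⟩
    · exact hdel
    · rw [Set.inter_univ] at hfX horth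
      exact absurd (huniq _ (h₀.isEMABCut_of_orthogonal hAX hXB horth) ▸ hfX) hfA
  obtain ⟨Ps, h, hcov⟩ := hf
  have hpair : ({f, g}ᶜ : Set E) = {f}ᶜ \ {g} := by
    rw [Set.insert_eq, Set.compl_union, Set.sdiff_eq]
  rw [hpair]
  rcases h.exists_deletion_or_orthogonal hAB hcov g with hdel | ⟨hgA, X, hAX, hXB, hgX, horth⟩
  · exact hdel
  · have hTX : X ∩ G.T ⊆ A := fun x hx =>
      (hT hx.2).resolve_right (hXB.notMem_of_mem_left hx.1)
    obtain ⟨Is, hIs, hIsX⟩ := h.exists_inner_linkage hG hAX hXB hTX hA horth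
    obtain ⟨Os, hOs, hOsX⟩ := h.exists_outer_linkage hAX hXB huniq horth hgX hgA
    have hX := huniq _ (hIs.isEMABCut_of_concat hAX hXB hIsX hOs hOsX)
    exact absurd (hX ▸ hgX.1) hgA

end Deletion

section Restrict

variable {F : Set E} {P : G.Path}

theorem IsWalk.restrict {vs : List V} {es : List E} (h : G.IsWalk vs es) (hes : ∀ e ∈ es, e ∈ F) :
    (G.restrict F).IsWalk vs (es.attachWith (· ∈ F) hes) := by
  induction h with
  | nil v => exact .nil v
  | cons hI _ ih => exact .cons hI (ih fun e he => hes e (.tail _ he))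

/-- A path all of whose edges lie in `F`, viewed as a path of `G.restrict F`. -/
def Path.restrict (P : G.Path) (hP : P.edgeSet ⊆ F) : (G.restrict F).Path where
  first := P.first
  last := P.last
  verts := P.verts
  edges := P.edges.attachWith (· ∈ F) fun _ he => hP he
  isWalk := P.isWalk.restrict fun _ he => hP he
  nodup := P.nodup
  head_eq := P.head_eq
  getLast_eq := P.getLast_eq

theorem Path.mem_edges_restrict (hP : P.edgeSet ⊆ F) {e : F} :
    e ∈ (P.restrict hP).edges ↔ e.1 ∈ P.edges :=
  List.mem_attachWith (fun _ he => hP he) e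

theorem IsABPath.isTPath_restrict {t : V} (ht : t ∈ G.T) (h : G.IsABPath {t} (G.T \ {t}) P)
    (hP : P.edgeSet ⊆ F) : (G.restrict F).IsTPath (P.restrict hP) :=
  ⟨h.1 ▸ ht, h.2.1.1, fun heq => h.2.1.2 (heq ▸ h.1), fun v hv hvT =>
    h.2.2 v hv (or_iff_not_imp_left.2 fun hvt => ⟨hvT, hvt⟩)⟩

theorem IsABSystem.linked_restrict {t : V} (ht : t ∈ G.T) {Ps : Set G.Path}
    (h : G.IsABSystem {t} (G.T \ {t}) F Ps) (hcov : G.edgeCut {t} ∩ F ⊆ G.sysEdges Ps) :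
    (G.restrict F).Linked t := by
  have hF : ∀ P : Ps, P.1.edgeSet ⊆ F := fun P _ he => h.edge_mem P.2 he
  refine ⟨Set.range fun P : Ps => P.1.restrict (hF P), ⟨?_, ?_⟩, fun e he => ?_⟩
  · rintro _ ⟨P, rfl⟩ _ ⟨Q, rfl⟩ hne e hP hQ
    rw [Path.mem_edges_restrict] at hP hQ
    obtain rfl : P = Q := Subtype.ext (h.edgeDisjoint.eq_of_mem P.2 Q.2 hP hQ)
    exact hne rfl
  · rintro _ ⟨P, rfl⟩
    exact (h.isABPath P.1 P.2).isTPath_restrict ht (hF P)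
  · obtain ⟨P, hP, heP⟩ := mem_sysEdges.1 (hcov ⟨he, e.2⟩)
    exact ⟨_, ⟨⟨P, hP⟩, rfl⟩, (Path.mem_edges_restrict _).2 heP⟩

end Restrict

end Grapht

theorem safe_deletion_terminals_general {V : Type u} {E : Type v} (G : Grapht V E)
    (hG : G.InnerEulerian) (f g : E) (t : V) (ht : t ∈ G.T) (hcount : (G.edgeCut {t}).Countable)
    (hEM : G.IsEMABCut {t} (G.T \ {t}) (G.edgeCut {t}))
    (huniq : ∀ C : Set E, G.IsEMABCut {t} (G.T \ {t}) C → C = G.edgeCut {t}) :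
    (G.restrict {f, g}ᶜ).Linked t := by
  have hT : G.T ⊆ {t} ∪ G.T \ {t} := by rw [Set.union_sdiff_self]; exact Set.subset_union_right
  obtain ⟨Ps, hPs, hcov⟩ :=
    hG.exists_linkage_compl_pair Set.disjoint_sdiff_right hT hcount hEM huniq f g
  exact hPs.linked_restrict ht hcov

/-- In a countable inner Eulerian grapht, after deleting any (at most) two edges every
terminal `t` for which `δ(t)` was the unique Erdős–Menger `t(T−t)`-cut remains
linked. -/
theorem safe_deletion_terminals {V : Type u} {E : Type v} [Countable E]
    (G : Grapht V E) (hG : G.InnerEulerian) :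
    ∀ f g : E, ∀ t ∈ G.T,
      G.IsEMABCut {t} (G.T \ {t}) (G.edgeCut {t}) →
      (∀ C : Set E, G.IsEMABCut {t} (G.T \ {t}) C → C = G.edgeCut {t}) →
      (G.restrict {f, g}ᶜ).Linked t :=
  fun f g t ht => safe_deletion_terminals_general G hG f g t ht (Set.to_countable _)
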